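/- arXiv:2509.03478 — 3 statements merged into one kernel-verified Lean document; each statement's English description precedes it below -/
import Mathlib

section
/- For every integer ℓ ≥ 1, every continuous function g : [r0, ∞) → ℝ with ‖g‖_{L²_{δ-2}} < ∞ and ‖g‖_{C⁰_{δ-2}} < ∞, and every real number v, there exists a unique function f belonging to H²_δ ∩ C²_δ such that (L_ℓ f)(r) = g(r) for all r ≥ r0 and f(r0) = v. -/
/-!
Multiplying by `p = r(r - 2m0)` puts the equation in the form `(p f')' - λ f = p g` with
`λ = l(l+1) ≥ 2`, where `p` is comparable to `r²` on `[r0, ∞)`.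

*Uniqueness* (`eq_zero_of_decay`). For the difference `w` of two solutions,
`(p w w')' = p w'² + λ w² ≥ 0` and `w r0 = 0`, so `w w' ≥ 0` and `w²` is nondecreasing. As
`w² = O(r^(2δ))` tends to `0`, `w = 0`.

*Existence* (`exists_decaying`). The homogeneous equation has a positive nondecreasing polynomial
solution `u` (`exists_growing`). Writing `f = u h` gives `(p u² h')' = p u g`, so `h` is found by two
integrations, the second one from infinity. Monotonicity of `u` and `-1 < δ < 0` give `f = O(r^δ)`,
and the one free constant is determined by `f r0 = v`.

*Membership* (`memH2C2_of_sol`). Any solution that is `O(r^δ)` lies in the space. Integrating the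
divergence form gives `f' = O(r^(δ-1))` (`deriv_bound`), the energy identity with weight
`r^(-2δ-1) f` gives the weighted `L²` bounds for `f` and `f'` (`energy_estimate`), and the equation
itself then controls `f''`.
-/

open Set MeasureTheory
open scoped ENNReal

/-- Squared weighted L² norm: `‖f‖²_{L²_μ} = ∫_{r0}^∞ r^{-2μ-1} f(r)² dr`. -/
noncomputable def wL2 (r0 μ : ℝ) (f : ℝ → ℝ) : ℝ≥0∞ :=
  ∫⁻ r in Set.Ioi r0, ENNReal.ofReal (r ^ (-2*μ-1) * (f r)^2)

/-- Squared weighted C⁰ norm: `‖f‖²_{C⁰_μ} = sup_{r ≥ r0} r^{-2μ} f(r)²`. -/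
noncomputable def wC0 (r0 μ : ℝ) (f : ℝ → ℝ) : ℝ≥0∞ :=
  ⨆ r ∈ Set.Ici r0, ENNReal.ofReal (r ^ (-2*μ) * (f r)^2)

/-- First derivative on `[r0, ∞)`. -/
noncomputable def d1 (r0 : ℝ) (f : ℝ → ℝ) : ℝ → ℝ :=
  fun r => derivWithin f (Set.Ici r0) r

/-- Second derivative on `[r0, ∞)`. -/
noncomputable def d2 (r0 : ℝ) (f : ℝ → ℝ) : ℝ → ℝ := d1 r0 (d1 r0 f)

/-- `f` belongs to `H²_δ ∩ C²_δ`. -/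
def MemH2C2 (r0 δ : ℝ) (f : ℝ → ℝ) : Prop :=
  ContDiffOn ℝ 2 f (Set.Ici r0) ∧
  wL2 r0 δ f ≠ ⊤ ∧ wL2 r0 (δ-1) (d1 r0 f) ≠ ⊤ ∧ wL2 r0 (δ-2) (d2 r0 f) ≠ ⊤ ∧
  wC0 r0 δ f ≠ ⊤ ∧ wC0 r0 (δ-1) (d1 r0 f) ≠ ⊤ ∧ wC0 r0 (δ-2) (d2 r0 f) ≠ ⊤

/-- The operator `L_ℓ`. -/
noncomputable def Lop (r0 m0 : ℝ) (l : ℤ) (f : ℝ → ℝ) : ℝ → ℝ :=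
  fun r => d2 r0 f r + (2*(r - m0)/(r*(r - 2*m0))) * d1 r0 f r
    - ((l : ℝ)*((l : ℝ)+1)/(r*(r - 2*m0))) * f r

/-! ### Weighted norms and one-sided derivatives -/

/-- `f` is a solution on `[r0, ∞)` of `f'' + 2(r-m0)/(r(r-2m0)) f' - lam/(r(r-2m0)) f = g`,
with first derivative `f1`. The equation is encoded by solving for `f''`, so that it holds with
derivatives within `[r0, ∞)`, one-sided at `r0`. -/
def SolOn (r0 m0 lam : ℝ) (g f f1 : ℝ → ℝ) : Prop :=
  ∀ r, r0 ≤ r → HasDerivWithinAt f (f1 r) (Ici r0) r ∧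
    HasDerivWithinAt f1
      (g r - 2*(r - m0)/(r*(r - 2*m0)) * f1 r + lam/(r*(r - 2*m0)) * f r) (Ici r0) r

/-- Mean value inequality: if `|B'| ≤ A'` on `[r0, ∞)`, the variation of `B` from `r0` is at most
that of `A`. -/
theorem abs_sub_le_of_deriv_le {r0 : ℝ} {A A' B B' : ℝ → ℝ}
    (hA : ∀ r, r0 ≤ r → HasDerivWithinAt A (A' r) (Ici r0) r)
    (hB : ∀ r, r0 ≤ r → HasDerivWithinAt B (B' r) (Ici r0) r)
    (h : ∀ r, r0 ≤ r → |B' r| ≤ A' r) {r : ℝ} (hr : r0 ≤ r) :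
    |B r - B r0| ≤ A r - A r0 := by
  have key : ∀ (C C' : ℝ → ℝ), (∀ r, r0 ≤ r → HasDerivWithinAt C (C' r) (Ici r0) r) →
      (∀ r, r0 ≤ r → 0 ≤ C' r) → C r0 ≤ C r := by
    intro C C' hC hn
    refine monotoneOn_of_hasDerivWithinAt_nonneg (convex_Ici r0) (f' := C')
      (fun x hx => (hC x hx).continuousWithinAt) ?_ ?_ self_mem_Ici hr hr
    · intro x hx
      exact (hC x (interior_subset hx)).mono interior_subset
    · intro x hx
      exact hn x (interior_subset hx)
  have h1 := key _ _ (fun r hr => (hA r hr).sub (hB r hr))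
    (fun r hr => by linarith [(abs_le.1 (h r hr)).2])
  have h2 := key _ _ (fun r hr => (hA r hr).add (hB r hr))
    (fun r hr => by linarith [(abs_le.1 (h r hr)).1])
  simp only [Pi.sub_apply, Pi.add_apply] at h1 h2
  rw [abs_le]
  constructor <;> linarith

theorem calc_of_hasDeriv {r0 : ℝ} {f f1 f2 : ℝ → ℝ}
    (h1 : ∀ r, r0 ≤ r → HasDerivWithinAt f (f1 r) (Ici r0) r)
    (h2 : ∀ r, r0 ≤ r → HasDerivWithinAt f1 (f2 r) (Ici r0) r)
    (hc : ContinuousOn f2 (Ici r0)) :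
    ContDiffOn ℝ 2 f (Ici r0) ∧ (∀ r, r0 ≤ r → d1 r0 f r = f1 r) ∧
      (∀ r, r0 ≤ r → d2 r0 f r = f2 r) := by
  have hu := uniqueDiffOn_Ici r0
  have e1 : ∀ r ∈ Ici r0, derivWithin f (Ici r0) r = f1 r :=
    fun r hr => (h1 r hr).derivWithin (hu r hr)
  have e2 : ∀ r ∈ Ici r0, derivWithin f1 (Ici r0) r = f2 r :=
    fun r hr => (h2 r hr).derivWithin (hu r hr)
  refine ⟨?_, e1, ?_⟩
  · rw [show (2 : WithTop ℕ∞) = 1 + 1 by norm_num, contDiffOn_succ_iff_derivWithin hu]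
    refine ⟨fun r hr => (h1 r hr).differentiableWithinAt, by simp, ?_⟩
    refine ContDiffOn.congr ?_ e1
    rw [show (1 : WithTop ℕ∞) = 0 + 1 by norm_num, contDiffOn_succ_iff_derivWithin hu]
    refine ⟨fun r hr => (h2 r hr).differentiableWithinAt, by simp, ?_⟩
    rw [contDiffOn_zero]
    exact hc.congr e2
  · intro r hr
    have : derivWithin (d1 r0 f) (Ici r0) r = derivWithin f1 (Ici r0) r :=
      derivWithin_congr e1 (e1 r hr)
    exact this.trans (e2 r hr)

theorem hasDeriv_of_contDiff {r0 : ℝ} {f : ℝ → ℝ} (h : ContDiffOn ℝ 2 f (Ici r0)) :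
    (∀ r, r0 ≤ r → HasDerivWithinAt f (d1 r0 f r) (Ici r0) r) ∧
    (∀ r, r0 ≤ r → HasDerivWithinAt (d1 r0 f) (d2 r0 f r) (Ici r0) r) := by
  have hu := uniqueDiffOn_Ici r0
  rw [show (2 : WithTop ℕ∞) = 1 + 1 by norm_num, contDiffOn_succ_iff_derivWithin hu] at h
  exact ⟨fun r hr => (h.1 r hr).hasDerivWithinAt,
    fun r hr => ((h.2.2.differentiableOn (by norm_num)) r hr).hasDerivWithinAt⟩

/-- The weighted `C⁰` norm is finite iff `f = O(r^μ)` on `[r0, ∞)`. -/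
theorem wC0_iff {r0 μ : ℝ} (h0 : 0 < r0) {f : ℝ → ℝ} :
    wC0 r0 μ f ≠ ⊤ ↔ ∃ C, 0 ≤ C ∧ ∀ r, r0 ≤ r → |f r| ≤ C * r ^ μ := by
  have e : ∀ r, r0 ≤ r → r ^ (-2*μ) * (r^μ)^2 = 1 := by
    intro r hr
    have : 0 < r := h0.trans_le hr
    rw [← Real.rpow_natCast, ← Real.rpow_mul this.le, ← Real.rpow_add this]
    have : -2 * μ + μ * ((2:ℕ):ℝ) = 0 := by push_cast; ring
    rw [this, Real.rpow_zero]
  constructor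
  · intro h
    refine ⟨Real.sqrt (wC0 r0 μ f).toReal, Real.sqrt_nonneg _, fun r hr => ?_⟩
    have hp : 0 < r := h0.trans_le hr
    have h1 : ENNReal.ofReal (r ^ (-2*μ) * (f r)^2) ≤ wC0 r0 μ f :=
      le_iSup₂ (f := fun r (_ : r ∈ Ici r0) => ENNReal.ofReal (r ^ (-2*μ) * (f r)^2)) r hr
    have h2 := (ENNReal.ofReal_le_iff_le_toReal h).1 h1
    have h3 : 0 < r ^ μ := Real.rpow_pos_of_pos hp _
    apply abs_le_of_sq_le_sq _ (by positivity)
    rw [mul_pow, Real.sq_sqrt ENNReal.toReal_nonneg]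
    calc f r ^ 2 = (r ^ (-2*μ) * (f r)^2) * (r^μ)^2 := by linear_combination -(f r)^2 * e r hr
      _ ≤ _ := by gcongr
  · rintro ⟨C, hC, h⟩
    refine ne_top_of_le_ne_top (ENNReal.ofReal_ne_top (r := C^2)) (iSup₂_le fun r hr => ?_)
    apply ENNReal.ofReal_le_ofReal
    have hp : 0 < r := h0.trans_le hr
    have : f r ^ 2 ≤ (C * r^μ)^2 := by
      rw [← sq_abs]; gcongr; exact h r hr
    calc _ ≤ r ^ (-2*μ) * (C * r^μ)^2 := by gcongr
      _ = C^2 := by linear_combination C^2 * e r hr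

theorem wL2_iff {r0 μ : ℝ} (h0 : 0 < r0) {f : ℝ → ℝ} (hf : ContinuousOn f (Ici r0)) :
    wL2 r0 μ f ≠ ⊤ ↔ IntegrableOn (fun r => r ^ (-2*μ-1) * (f r)^2) (Ioi r0) := by
  have hc : ContinuousOn (fun r => r ^ (-2*μ-1) * (f r)^2) (Ioi r0) := by
    apply ContinuousOn.mul
    · intro r hr
      exact (Real.continuousAt_rpow_const _ _ (Or.inl (h0.trans hr).ne')).continuousWithinAt
    · exact (hf.mono Ioi_subset_Ici_self).pow 2
  rw [IntegrableOn, Integrable, hasFiniteIntegral_iff_ofReal, lt_top_iff_ne_top]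
  · exact ⟨fun h => ⟨hc.aestronglyMeasurable measurableSet_Ioi, h⟩, fun h => h.2⟩
  · filter_upwards [ae_restrict_mem measurableSet_Ioi] with r hr
    have : 0 < r := h0.trans hr
    positivity

/-! ### The increasing homogeneous solution -/

/-- The homogeneous equation has a positive nondecreasing solution: a polynomial of degree `l` in
`y = r - 2 m0`, with coefficients given by
`2 m0 (k+1)² a (k+1) = (l(l+1) - k(k+1)) a k`, which are nonnegative up to `k = l`. -/
theorem exists_growing {m0 : ℝ} (hm0 : 0 < m0) (l : ℤ) (hl : 1 ≤ l) :
    ∃ u u1 u2 : ℝ → ℝ, (∀ r, HasDerivAt u (u1 r) r) ∧ (∀ r, HasDerivAt u1 (u2 r) r) ∧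
      (∀ r, r*(r-2*m0) * u2 r + 2*(r-m0) * u1 r = (l:ℝ)*((l:ℝ)+1) * u r) ∧
      (∀ r, 2*m0 < r → 0 < u r ∧ 0 ≤ u1 r) := by
  obtain ⟨n, rfl⟩ := Int.eq_ofNat_of_zero_le (by omega : 0 ≤ l)
  obtain ⟨a, ha0, ha⟩ : ∃ a : ℕ → ℝ, a 0 = 1 ∧ ∀ k, a (k+1) =
      ((n:ℝ)*(n+1) - k*(k+1)) * a k / (2*m0*(k+1)^2) :=
    ⟨fun k => Nat.rec 1 (fun k x => ((n:ℝ)*(n+1) - k*(k+1)) * x / (2*m0*(k+1)^2)) k, rfl,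
      fun k => rfl⟩
  have hpos : ∀ k, k ≤ n → 0 ≤ a k := by
    intro k
    induction k with
    | zero => intro _; simp [ha0]
    | succ k ih =>
      intro hk
      rw [ha]
      have h1 := ih (by omega)
      have h2 : (k:ℝ) ≤ n := by exact_mod_cast (by omega : k ≤ n)
      have h3 : 0 ≤ (n:ℝ)*(n+1) - k*(k+1) := by
        have := mul_le_mul h2 (by linarith : (k:ℝ)+1 ≤ n+1) (by positivity) (by positivity)
        linarith
      positivity
  refine ⟨fun r => ∑ k ∈ Finset.range (n+1), a k * (r-2*m0)^k,
    fun r => ∑ k ∈ Finset.range (n+1), a k * (k * (r-2*m0)^(k-1)),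
    fun r => ∑ k ∈ Finset.range (n+1), a k * (k * (((k-1 : ℕ):ℝ) * (r-2*m0)^(k-1-1))),
    ?_, ?_, ?_, ?_⟩
  · intro r
    apply HasDerivAt.fun_sum
    intro k _
    simpa using (((hasDerivAt_id r).sub_const (2*m0)).pow k).const_mul (a k)
  · intro r
    apply HasDerivAt.fun_sum
    intro k _
    simpa using ((((hasDerivAt_id r).sub_const (2*m0)).pow (k-1)).const_mul (k:ℝ)).const_mul (a k)
  · intro r
    -- the partial sums of the differential expression telescope; at `N = n` the remainder vanishes
    have key : ∀ N : ℕ, r*(r-2*m0) * (∑ k ∈ Finset.range (N+1),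
          a k * (k * (((k-1 : ℕ):ℝ) * (r-2*m0)^(k-1-1)))) +
        2*(r-m0) * (∑ k ∈ Finset.range (N+1), a k * (k * (r-2*m0)^(k-1))) -
        (n:ℝ)*(n+1) * (∑ k ∈ Finset.range (N+1), a k * (r-2*m0)^k) =
        -(((n:ℝ)*(n+1) - N*(N+1)) * a N * (r-2*m0)^N) := by
      intro N
      induction N with
      | zero => simp
      | succ N ih =>
        rw [Finset.sum_range_succ _ (N+1), Finset.sum_range_succ _ (N+1),
          Finset.sum_range_succ _ (N+1)]
        have h1 : ((n:ℝ)*(n+1) - N*(N+1)) * a N = 2*m0*(N+1)^2 * a (N+1) := by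
          rw [ha]; field_simp
        rw [h1] at ih
        rcases N with _ | N
        · simp at ih ⊢
          linear_combination -ih
        · simp only [Nat.add_sub_cancel] at ih ⊢
          push_cast at ih ⊢
          simp only [pow_succ] at ih ⊢
          linear_combination ih
    have := key n
    simp only [sub_self, zero_mul, neg_zero] at this
    push_cast
    linarith
  · intro r hr
    have hy : 0 < r - 2*m0 := by linarith
    constructor
    · beta_reduce
      rw [Finset.sum_range_succ']
      have : 0 ≤ ∑ k ∈ Finset.range n, a (k+1) * (r-2*m0)^(k+1) := by
        apply Finset.sum_nonneg
        intro k hk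
        have := hpos (k+1) (by have := Finset.mem_range.1 hk; omega)
        positivity
      simp only [ha0, pow_zero, mul_one]
      linarith
    · apply Finset.sum_nonneg
      intro k hk
      have := hpos k (by have := Finset.mem_range.1 hk; omega)
      positivity

/-! ### Uniqueness and the derivative bound -/

/-- The equation in divergence form: `(r(r-2m0) f')' = lam f + r(r-2m0) g`. -/
theorem hasDerivWithinAt_flux {r0 m0 lam : ℝ} (hm0 : 0 < m0) (hr0 : 2*m0 < r0) {g f f1 : ℝ → ℝ}
    (h : SolOn r0 m0 lam g f f1) {r : ℝ} (hr : r0 ≤ r) :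
    HasDerivWithinAt (fun r => r*(r-2*m0) * f1 r) (lam * f r + r*(r-2*m0) * g r) (Ici r0) r := by
  have h1 : HasDerivWithinAt (fun r : ℝ => r*(r-2*m0)) (1*(r-2*m0) + r*1) (Ici r0) r :=
    ((hasDerivAt_id r).mul ((hasDerivAt_id r).sub_const _)).hasDerivWithinAt
  refine (h1.mul (h r hr).2).congr_deriv ?_
  have : r ≠ 0 := by linarith
  have : r - 2*m0 ≠ 0 := by linarith
  field_simp
  ring

/-- A homogeneous solution that vanishes at `r0` and is `O(r^δ)` with `δ < 0` is zero: both
`r(r-2m0) w w'` and then `w²` are nondecreasing, while `w²` tends to `0`. -/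
theorem eq_zero_of_decay {r0 m0 lam δ C : ℝ} (hm0 : 0 < m0) (hr0 : 2*m0 < r0) (hlam : 0 ≤ lam)
    (hδ : δ < 0) {w w1 : ℝ → ℝ} (h : SolOn r0 m0 lam (fun _ => 0) w w1)
    (hw : ∀ r, r0 ≤ r → |w r| ≤ C * r ^ δ) (h0 : w r0 = 0) {r : ℝ} (hr : r0 ≤ r) : w r = 0 := by
  have hp : ∀ r, r0 ≤ r → 0 < r * (r - 2*m0) := fun r hr => mul_pos (by linarith) (by linarith)
  -- `r (r - 2 m0) w w'` is nondecreasing from `0`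
  have hW : ∀ r, r0 ≤ r → 0 ≤ w r * w1 r := by
    intro r hr
    have := abs_sub_le_of_deriv_le (B := fun _ => 0) (B' := fun _ => 0)
      (fun r hr => (h r hr).1.mul (hasDerivWithinAt_flux hm0 hr0 h hr))
      (fun r _ => hasDerivWithinAt_const _ _ _)
      (fun r hr => by
        have := hp r hr
        rw [abs_zero]
        have e : w1 r * (r * (r - 2 * m0) * w1 r) +
            w r * (lam * w r + r * (r - 2 * m0) * 0) =
          (r * (r - 2 * m0)) * w1 r ^ 2 + lam * w r ^ 2 := by ring
        rw [e]; positivity) hr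
    simp only [Pi.mul_apply, h0, sub_self, abs_zero, zero_mul, sub_zero] at this
    have hq := hp r hr
    by_contra hneg
    push Not at hneg
    nlinarith [mul_pos hq (neg_pos.2 hneg)]
  have hmono : ∀ R, r ≤ R → w r ^ 2 ≤ w R ^ 2 := by
    intro R hR
    have := abs_sub_le_of_deriv_le (r0 := r) (B := fun _ => 0) (B' := fun _ => 0)
      (fun s hs => ((h s (hr.trans hs)).1.mono (Ici_subset_Ici.2 hr)).pow 2)
      (fun r _ => hasDerivWithinAt_const _ _ _)
      (fun s hs => by
        have := hW s (hr.trans hs)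
        simp
        linarith) hR
    simpa using this
  have hlim : Filter.Tendsto (fun R : ℝ => (C * R ^ δ)^2) Filter.atTop (nhds 0) := by
    have := ((tendsto_rpow_neg_atTop (y := -δ) (by linarith)).const_mul C).pow 2
    simpa using this
  have hle : w r ^ 2 ≤ 0 := by
    apply ge_of_tendsto hlim
    filter_upwards [Filter.eventually_ge_atTop r] with R hR
    refine (hmono R hR).trans ?_
    rw [← sq_abs]
    gcongr
    exact hw R (hr.trans hR)
  exact pow_eq_zero_iff (two_ne_zero) |>.1 (le_antisymm hle (sq_nonneg _))

theorem mul_rpow_sub_one {r : ℝ} (hr : 0 < r) (μ : ℝ) : r * r ^ (μ - 1) = r ^ μ := by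
  rw [Real.rpow_sub_one hr.ne']; field_simp

theorem sq_mul_rpow_sub_two {r : ℝ} (hr : 0 < r) (μ : ℝ) : r^2 * r ^ (μ - 2) = r ^ μ := by
  rw [show μ - 2 = μ - 1 - 1 by ring, sq, mul_assoc, mul_rpow_sub_one hr, mul_rpow_sub_one hr]

theorem weight_bounds {r0 m0 : ℝ} (hm0 : 0 < m0) (hr0 : 2*m0 < r0) :
    ∃ κ, 0 < κ ∧ ∀ r, r0 ≤ r → κ * r^2 ≤ r * (r - 2*m0) ∧ r * (r - 2*m0) ≤ r^2 := by
  have h0 : 0 < r0 := by linarith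
  refine ⟨1 - 2*m0/r0, by rw [sub_pos, div_lt_one h0]; exact hr0, fun r hr => ⟨?_, ?_⟩⟩
  · have : 2*m0 ≤ 2*m0/r0 * r := by
      rw [div_mul_eq_mul_div, le_div_iff₀ h0]; gcongr
    nlinarith
  · nlinarith

/-- If `g = O(r^(δ-2))`, a solution that is `O(r^δ)` has derivative `O(r^(δ-1))`: the flux
`r(r-2m0) f'` has derivative `O(r^δ)`, hence is `O(r^(δ+1))`, where `δ > -1` lets `r^(δ+1)` absorb
constants. -/
theorem deriv_bound {r0 m0 lam δ C D : ℝ} (hm0 : 0 < m0) (hr0 : 2*m0 < r0) (hlam : 0 ≤ lam)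
    (hδ : -1 < δ) {g f f1 : ℝ → ℝ} (h : SolOn r0 m0 lam g f f1)
    (hf : ∀ r, r0 ≤ r → |f r| ≤ C * r ^ δ) (hg : ∀ r, r0 ≤ r → |g r| ≤ D * r ^ (δ-2)) :
    ∃ K, 0 ≤ K ∧ ∀ r, r0 ≤ r → |f1 r| ≤ K * r ^ (δ - 1) := by
  have h0 : 0 < r0 := by linarith
  obtain ⟨κ, hκ, hb⟩ := weight_bounds hm0 hr0
  have hd : 0 < δ + 1 := by linarith
  set A := (lam * C + D) / (δ + 1) with hA
  set M0 := |r0 * (r0 - 2*m0) * f1 r0| with hM0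
  have hr0p : 0 < r0 ^ (δ+1) := Real.rpow_pos_of_pos h0 _
  have key : ∀ r, r0 ≤ r → |r * (r - 2*m0) * f1 r| ≤ (A + M0 / r0^(δ+1) + |A|) * r^(δ+1) := by
    intro r hr
    have hp : 0 < r := h0.trans_le hr
    have := abs_sub_le_of_deriv_le (r0 := r0) (A := fun r => A * r^(δ+1))
      (A' := fun r => (lam * C + D) * r^δ)
      (fun r hr => (((Real.hasDerivAt_rpow_const (p := δ+1)
        (Or.inl (h0.trans_le hr).ne')).const_mul A).congr_deriv (by
          rw [hA, add_sub_cancel_right]; field_simp)).hasDerivWithinAt)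
      (fun r hr => hasDerivWithinAt_flux hm0 hr0 h hr)
      (fun r hr => by
        have hp : 0 < r := h0.trans_le hr
        have hb1 := hb r hr
        have hpp : 0 ≤ r * (r - 2*m0) := by nlinarith
        calc _ ≤ |lam * f r| + |r * (r-2*m0) * g r| := abs_add_le _ _
          _ = lam * |f r| + r * (r-2*m0) * |g r| := by
            rw [abs_mul, abs_mul, abs_of_nonneg hlam, abs_of_nonneg hpp]
          _ ≤ lam * (C * r^δ) + r^2 * (D * r^(δ-2)) := by
            gcongr
            · exact hf r hr
            · exact hb1.2
            · exact hg r hr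
          _ = (lam * C + D) * r^δ := by
            rw [← sq_mul_rpow_sub_two hp δ]; ring) hr
    have h3 : M0 ≤ M0 / r0^(δ+1) * r^(δ+1) := by
      rw [div_mul_eq_mul_div, le_div_iff₀ hr0p]
      gcongr
    have h4 : -A * r0^(δ+1) ≤ |A| * r^(δ+1) := by
      apply mul_le_mul (neg_le_abs A) (Real.rpow_le_rpow h0.le hr hd.le) hr0p.le (abs_nonneg _)
    have h5 := abs_sub_abs_le_abs_sub (r * (r - 2*m0) * f1 r) (r0 * (r0 - 2*m0) * f1 r0)
    rw [← hM0] at h5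
    beta_reduce at this
    linarith
  set B := A + M0 / r0^(δ+1) + |A|
  have hB : 0 ≤ B := by
    have : 0 ≤ M0 / r0^(δ+1) := by positivity
    linarith [neg_abs_le A]
  refine ⟨B / κ, by positivity, fun r hr => ?_⟩
  have hp : 0 < r := h0.trans_le hr
  have hb1 := hb r hr
  have h6 := key r hr
  rw [abs_mul, abs_of_nonneg (by nlinarith : 0 ≤ r * (r - 2*m0))] at h6
  have h7 : r^2 * r^(δ-1) = r^(δ+1) := by
    rw [← sq_mul_rpow_sub_two hp (δ+1)]; ring_nf
  rw [div_mul_eq_mul_div, le_div_iff₀ hκ]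
  have h8 : κ * r^2 * |f1 r| ≤ B * r^(δ-1) * r^2 := by
    calc _ ≤ r * (r - 2*m0) * |f1 r| := mul_le_mul_of_nonneg_right hb1.1 (abs_nonneg _)
      _ ≤ _ := h6
      _ = _ := by rw [← h7]; ring
  have h9 : 0 < r^2 := by positivity
  nlinarith

/-! ### Existence of a decaying solution -/

theorem exists_antideriv {r0 : ℝ} {φ : ℝ → ℝ} (hφ : ContinuousOn φ (Ici r0)) :
    ∃ F : ℝ → ℝ, F r0 = 0 ∧ (∀ r, r0 ≤ r → F r = ∫ t in r0..r, φ t) ∧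
      ∀ r, r0 ≤ r → HasDerivWithinAt F (φ r) (Ici r0) r := by
  -- extending `φ` by a constant below `r0` makes the fundamental theorem hold at `r0` as well
  have hc : Continuous fun t => φ (max t r0) :=
    hφ.comp_continuous (by fun_prop) (fun t => mem_Ici.2 (le_max_right t r0))
  refine ⟨fun r => ∫ t in r0..r, φ (max t r0), by simp, fun r hr => ?_, fun r hr => ?_⟩
  · apply intervalIntegral.integral_congr
    intro t ht
    rw [uIcc_of_le hr] at ht
    simp [max_eq_left ht.1]
  · have := (hc.integral_hasStrictDerivAt r0 r).hasDerivAt.hasDerivWithinAt (s := Ici r0)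
    simpa [max_eq_left hr] using this

theorem monotone_of_deriv {r0 : ℝ} {u u1 : ℝ → ℝ} (hu : ∀ r, HasDerivAt u (u1 r) r)
    (h : ∀ r, r0 ≤ r → 0 ≤ u1 r) {r s : ℝ} (hr : r0 ≤ r) (hs : r ≤ s) : u r ≤ u s := by
  have := abs_sub_le_of_deriv_le (r0 := r) (B := fun _ => 0) (B' := fun _ => 0)
      (fun s _ => (hu s).hasDerivWithinAt)
      (fun r _ => hasDerivWithinAt_const _ _ _)
      (fun s hs => by simpa using h s (hr.trans hs)) hs
  simpa using this

/-- If `u` is positive and nondecreasing and `F = O(r^(δ+1) u)`, then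
`u(r) ∫_r^∞ F / (t(t-2m0) u²) dt` converges and is `O(r^δ)`. Monotonicity of `u` is all that is
used about its growth: `1/u(t) ≤ 1/u(r)` under the integral. -/
theorem tail_bound {r0 m0 δ K : ℝ} (hm0 : 0 < m0) (hr0 : 2*m0 < r0) (hδ : δ < 0) (hK : 0 ≤ K)
    {u u1 F : ℝ → ℝ} (hu : ∀ r, HasDerivAt u (u1 r) r)
    (hpos : ∀ r, r0 ≤ r → 0 < u r ∧ 0 ≤ u1 r) (hF : ContinuousOn F (Ici r0))
    (hFb : ∀ r, r0 ≤ r → |F r| ≤ K * r^(δ+1) * u r) :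
    ContinuousOn (fun t => F t / (t * (t - 2*m0) * u t ^ 2)) (Ici r0) ∧
    IntegrableOn (fun t => F t / (t * (t - 2*m0) * u t ^ 2)) (Ioi r0) ∧
    ∃ C, ∀ r, r0 ≤ r → |u r * ∫ t in Ioi r, F t / (t * (t - 2*m0) * u t ^ 2)| ≤ C * r ^ δ := by
  have h0 : 0 < r0 := by linarith
  obtain ⟨κ, hκ, hb⟩ := weight_bounds hm0 hr0
  have hcu : Continuous u := continuous_iff_continuousAt.2 fun r => (hu r).continuousAt
  have hpp : ∀ t, r0 ≤ t → 0 < t * (t - 2*m0) := fun r hr => mul_pos (by linarith) (by linarith)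
  have hc : ContinuousOn (fun t => F t / (t * (t - 2*m0) * u t ^ 2)) (Ici r0) := by
    apply hF.div (by fun_prop)
    intro t ht
    exact (mul_pos (hpp t ht) (pow_pos (hpos t ht).1 2)).ne'
  have hbd : ∀ r, r0 ≤ r → ∀ t, r ≤ t →
      ‖F t / (t * (t - 2*m0) * u t ^ 2)‖ ≤ K / κ / u r * t^(δ-1) := by
    intro r hr t ht
    have hrt := hr.trans ht
    have htp : 0 < t := h0.trans_le hrt
    have hut := (hpos t hrt).1
    have hur := (hpos r hr).1
    have hmono := monotone_of_deriv hu (fun r hr => (hpos r hr).2) hr ht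
    rw [Real.norm_eq_abs, abs_div, abs_of_pos (mul_pos (hpp t hrt) (pow_pos hut 2))]
    have e : t^(δ+1) = t^2 * t^(δ-1) := by
      rw [← sq_mul_rpow_sub_two htp (δ+1)]; ring_nf
    calc _ ≤ (K * t^(δ+1) * u t) / ((κ * t^2) * u t ^ 2) := by
          have h1 := (hb t hrt).1
          have h2 := hFb t hrt
          exact div_le_div₀ ((abs_nonneg _).trans h2) h2 (by positivity)
            (mul_le_mul_of_nonneg_right h1 (by positivity))
      _ = K / κ / u t * t^(δ-1) := by rw [e]; field_simp
      _ ≤ _ := by gcongr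
  have hIoi : ∀ r, r0 ≤ r →
      IntegrableOn (fun t => F t / (t * (t - 2*m0) * u t ^ 2)) (Ioi r) := by
    intro r hr
    apply Integrable.mono' ((integrableOn_Ioi_rpow_of_lt (by linarith : δ - 1 < -1)
      (h0.trans_le hr)).const_mul (K / κ / u r))
    · exact (hc.mono (fun t ht => hr.trans (le_of_lt ht))).aestronglyMeasurable measurableSet_Ioi
    · filter_upwards [ae_restrict_mem measurableSet_Ioi] with t ht
      exact hbd r hr t (le_of_lt ht)
  refine ⟨hc, hIoi r0 le_rfl, K / κ / (-δ), fun r hr => ?_⟩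
  have hur := (hpos r hr).1
  have h1 := norm_integral_le_of_norm_le ((integrableOn_Ioi_rpow_of_lt (by linarith : δ - 1 < -1)
      (h0.trans_le hr)).const_mul (K / κ / u r))
      (f := fun t => F t / (t * (t - 2*m0) * u t ^ 2)) (by
        filter_upwards [ae_restrict_mem measurableSet_Ioi] with t ht
        exact hbd r hr t (le_of_lt ht))
  rw [integral_const_mul, integral_Ioi_rpow_of_lt (by linarith : δ - 1 < -1) (h0.trans_le hr),
    sub_add_cancel] at h1
  rw [abs_mul, abs_of_pos hur]
  calc _ ≤ u r * (K / κ / u r * (-r^δ/δ)) := by gcongr; exact h1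
    _ = _ := by
      have : δ ≠ 0 := hδ.ne
      field_simp

/-- Reduction of order: with `u` the increasing homogeneous solution and
`F' = r(r-2m0) u g`, the function `f = -u ∫_r^∞ (F - c) / (t(t-2m0) u²) dt` solves the equation and
is `O(r^δ)` for every constant `c`; the constant is then fixed by `f r0 = v`. -/
theorem exists_decaying {r0 m0 δ v D : ℝ} (hm0 : 0 < m0) (hr0 : 2*m0 < r0) (hδ1 : -1 < δ)
    (hδ2 : δ < 0) (l : ℤ) (hl : 1 ≤ l) {g : ℝ → ℝ} (hgc : ContinuousOn g (Ici r0)) (hD : 0 ≤ D)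
    (hg : ∀ r, r0 ≤ r → |g r| ≤ D * r ^ (δ-2)) :
    ∃ f f1 : ℝ → ℝ, ∃ C, SolOn r0 m0 ((l:ℝ)*((l:ℝ)+1)) g f f1 ∧ f r0 = v ∧
      ∀ r, r0 ≤ r → |f r| ≤ C * r ^ δ := by
  have h0 : 0 < r0 := by linarith
  have hd : 0 < δ + 1 := by linarith
  obtain ⟨u, u1, u2, hu, hu1, hode, hpos'⟩ := exists_growing hm0 l hl
  have hpos : ∀ r, r0 ≤ r → 0 < u r ∧ 0 ≤ u1 r := fun r hr => hpos' r (hr0.trans_le hr)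
  have hcu : Continuous u := continuous_iff_continuousAt.2 fun r => (hu r).continuousAt
  have hpp : ∀ t, r0 ≤ t → 0 < t * (t - 2*m0) := fun r hr => mul_pos (by linarith) (by linarith)
  have hbp : ∀ t, r0 ≤ t → t * (t - 2*m0) ≤ t^2 := fun r hr => by nlinarith
  obtain ⟨F, hF0, -, hF⟩ := exists_antideriv (r0 := r0) (φ := fun r => r * (r-2*m0) * u r * g r)
    (ContinuousOn.mul (by fun_prop) hgc)
  set A := D / (δ+1) with hA
  have hA0 : 0 ≤ A := by positivity
  have hFb : ∀ r, r0 ≤ r → |F r| ≤ A * r^(δ+1) * u r := by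
    intro r hr
    have := abs_sub_le_of_deriv_le (r0 := r0) (A := fun r => A * r^(δ+1) * u r)
      (A' := fun r => D * r^δ * u r + A * r^(δ+1) * u1 r)
      (fun r hr => ((((Real.hasDerivAt_rpow_const (p := δ+1)
        (Or.inl (h0.trans_le hr).ne')).const_mul A).mul (hu r)).congr_deriv (by
          rw [hA, add_sub_cancel_right]; field_simp)).hasDerivWithinAt)
      hF
      (fun r hr => by
        have hp : 0 < r := h0.trans_le hr
        obtain ⟨hur, hu1r⟩ := hpos r hr
        have h1 : 0 ≤ A * r^(δ+1) * u1 r := by positivity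
        have h2 : |r * (r-2*m0) * u r * g r| ≤ r^2 * u r * (D * r^(δ-2)) := by
          rw [abs_mul, abs_mul, abs_of_pos (hpp r hr), abs_of_pos hur]
          gcongr
          · exact hbp r hr
          · exact hg r hr
        have h3 := sq_mul_rpow_sub_two hp δ
        rw [← h3]
        linarith) hr
    have h4 : 0 ≤ A * r0^(δ+1) * u r0 := by
      have := (hpos r0 le_rfl).1
      positivity
    rw [hF0, sub_zero] at this
    linarith
  have hFc : ContinuousOn F (Ici r0) := fun r hr => (hF r hr).continuousWithinAt
  -- constants are also admissible fluxes
  have hone : ∀ c : ℝ, ∃ B, 0 ≤ B ∧ ∀ r, r0 ≤ r → |c| ≤ B * r^(δ+1) * u r := by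
    intro c
    have hu0 := (hpos r0 le_rfl).1
    have hr0p : 0 < r0 ^ (δ+1) := Real.rpow_pos_of_pos h0 _
    refine ⟨|c| / (r0^(δ+1) * u r0), by positivity, fun r hr => ?_⟩
    have := monotone_of_deriv hu (fun r hr => (hpos r hr).2) le_rfl hr
    have hp : 0 < r := h0.trans_le hr
    calc |c| = |c| / (r0^(δ+1) * u r0) * r0^(δ+1) * u r0 := by field_simp
      _ ≤ _ := by gcongr
  obtain ⟨B1, hB1, h1b⟩ := hone 1
  obtain ⟨-, hFi, -⟩ := tail_bound hm0 hr0 hδ2 hA0 hu hpos hFc hFb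
  obtain ⟨-, h1i, -⟩ := tail_bound hm0 hr0 hδ2 hB1 hu hpos continuousOn_const h1b
  set IF := ∫ t in Ioi r0, F t / (t * (t - 2*m0) * u t ^ 2) with hIF
  set I1 := ∫ t in Ioi r0, 1 / (t * (t - 2*m0) * u t ^ 2) with hI1
  have hI1pos : 0 < I1 := by
    have hq : ∀ t ∈ Ioi r0, 0 < 1 / (t * (t - 2*m0) * u t ^ 2) := fun t ht =>
      one_div_pos.2 (mul_pos (hpp t (le_of_lt ht)) (pow_pos (hpos t (le_of_lt ht)).1 2))
    rw [hI1, setIntegral_pos_iff_support_of_nonneg_ae _ h1i]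
    · rw [inter_eq_right.2 (fun t ht => Function.mem_support.2 (hq t ht).ne')]
      simp
    · filter_upwards [ae_restrict_mem measurableSet_Ioi] with t ht
      exact (hq t ht).le
  have hu0 := (hpos r0 le_rfl).1
  -- this is `f r0 = -u r0 * (IF - c * I1) = v` solved for `c`
  obtain ⟨c, hc⟩ : ∃ c, c = (IF + v / u r0) / I1 := ⟨_, rfl⟩
  obtain ⟨B, hB, hcb⟩ := hone c
  have hGb : ∀ r, r0 ≤ r → |F r - c| ≤ (A + B) * r^(δ+1) * u r := by
    intro r hr
    have := abs_sub (F r) c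
    have h1 := hFb r hr
    have h2 := hcb r hr
    linarith
  obtain ⟨hφc, hφi, C, hC⟩ := tail_bound (F := fun r => F r - c) hm0 hr0 hδ2
    (add_nonneg hA0 hB) hu hpos
    (hFc.sub continuousOn_const) hGb
  set φ : ℝ → ℝ := fun t => (F t - c) / (t * (t - 2*m0) * u t ^ 2) with hφ
  obtain ⟨P, hP0, hP, hP'⟩ := exists_antideriv hφc
  have hIφ : ∫ t in Ioi r0, φ t = -(v / u r0) := by
    have e : φ = fun t => F t / (t * (t - 2*m0) * u t ^ 2) -
        c * (1 / (t * (t - 2*m0) * u t ^ 2)) := by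
      funext t; rw [hφ]; ring
    rw [e, integral_sub hFi (h1i.const_mul c), integral_const_mul, ← hIF, ← hI1, hc]
    field_simp
    ring
  have hH : ∀ r, r0 ≤ r → P r + v / u r0 = -∫ t in Ioi r, φ t := by
    intro r hr
    have := intervalIntegral.integral_interval_add_Ioi hφi (hφi.mono_set (Ioi_subset_Ioi hr))
    rw [hP r hr]
    linarith
  refine ⟨fun r => u r * (P r + v / u r0),
    fun r => u1 r * (P r + v / u r0) + (F r - c) / (r * (r - 2*m0) * u r), C, ?_, ?_, ?_⟩
  · intro r hr
    have hur := (hpos r hr).1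
    have hr1 : r ≠ 0 := by linarith
    have hr2 : r - 2*m0 ≠ 0 := by linarith
    have hHd := (hP' r hr).add_const (v / u r0)
    have hpd : HasDerivAt (fun r : ℝ => r*(r-2*m0)) (1*(r-2*m0) + r*1) r :=
      (hasDerivAt_id r).mul ((hasDerivAt_id r).sub_const _)
    constructor
    · refine ((hu r).hasDerivWithinAt.mul hHd).congr_deriv ?_
      simp only [hφ]
      field_simp
    · refine (((hu1 r).hasDerivWithinAt.mul hHd).add (((hF r hr).sub_const c).div
        (hpd.mul (hu r)).hasDerivWithinAt
        (mul_ne_zero (mul_ne_zero hr1 hr2) hur.ne'))).congr_deriv ?_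
      have hu2 : u2 r = ((l:ℝ)*((l:ℝ)+1) * u r - 2*(r-m0) * u1 r) / (r * (r - 2*m0)) := by
        rw [eq_div_iff (mul_ne_zero hr1 hr2)]
        linarith [hode r]
      rw [hu2]
      simp only [hφ, Pi.mul_apply]
      field_simp
      ring
  · simp only [hP0]
    field_simp
    ring
  · intro r hr
    have := hC r hr
    beta_reduce
    rw [hH r hr, mul_neg, abs_neg]
    exact this

theorem SolOn.continuousOn {r0 m0 lam : ℝ} {g f f1 : ℝ → ℝ} (h : SolOn r0 m0 lam g f f1) :
    ContinuousOn f (Ici r0) ∧ ContinuousOn f1 (Ici r0) :=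
  ⟨fun r hr => (h r hr).1.continuousWithinAt, fun r hr => (h r hr).2.continuousWithinAt⟩

theorem rpow_weights {r : ℝ} (hr : 0 < r) (δ : ℝ) :
    r ^ (-2*(δ-1)-1) = r^(-2*δ-1) * r^2 ∧ r ^ (-2*(δ-2)-1) = r^(-2*δ-1) * r^4 := by
  constructor
  · rw [← sq_mul_rpow_sub_two hr]; ring_nf
  · rw [← sq_mul_rpow_sub_two hr, ← sq_mul_rpow_sub_two hr]; ring_nf

theorem continuousOn_rpow_Ici {r0 : ℝ} (h0 : 0 < r0) (s : ℝ) :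
    ContinuousOn (fun r : ℝ => r^s) (Ici r0) := fun _ hr =>
  (Real.continuousAt_rpow_const _ _ (Or.inl (h0.trans_le hr).ne')).continuousWithinAt

/-! ### Square-integrability and membership in the weighted spaces -/

/-- Weighted energy estimate. With `s = -2δ-1 ∈ (0,1)`, multiplying the equation by `r^s f` and
integrating by parts bounds `∫ r^s (κ r² f'² + f²/2)` by boundary terms and the weighted norm of
`g`; the zeroth order coefficient stays at least `lam - s(s+1)/2 ≥ 1`. The boundary terms are
bounded because `s + 2δ + 1 = 0`, so the pointwise decay is exactly what is needed. -/
theorem energy_estimate {r0 m0 lam δ C K : ℝ} (hm0 : 0 < m0) (hr0 : 2*m0 < r0) (hlam : 2 ≤ lam)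
    (hδ1 : -1 < δ) (hδ2 : δ < -(1/2)) {g f f1 : ℝ → ℝ} (hgc : ContinuousOn g (Ici r0))
    (hgi : IntegrableOn (fun r => r ^ (-2*(δ-2)-1) * (g r)^2) (Ioi r0))
    (h : SolOn r0 m0 lam g f f1)
    (hf : ∀ r, r0 ≤ r → |f r| ≤ C * r ^ δ) (hf1 : ∀ r, r0 ≤ r → |f1 r| ≤ K * r ^ (δ-1)) :
    IntegrableOn (fun r => r ^ (-2*δ-1) * (f r)^2) (Ioi r0) ∧
    IntegrableOn (fun r => r ^ (-2*(δ-1)-1) * (f1 r)^2) (Ioi r0) := by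
  have h0 : 0 < r0 := by linarith
  obtain ⟨κ, hκ, hb⟩ := weight_bounds hm0 hr0
  obtain ⟨hfc, hf1c⟩ := h.continuousOn
  obtain ⟨s, hs⟩ : ∃ s, s = -2*δ-1 := ⟨_, rfl⟩
  have hs0 : 0 < s := by linarith
  have hs1 : s < 1 := by linarith
  have hXc := continuousOn_rpow_Ici h0 s
  set Φ : ℝ → ℝ := fun r => r^s * (κ * r^2 * f1 r ^ 2 + 1/2 * f r ^ 2) with hΦ
  set Ψ : ℝ → ℝ := fun r => 1/2 * (r^s * r^4 * g r ^ 2) with hΨ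
  have hΦc : ContinuousOn Φ (Ici r0) := by fun_prop
  have hΨc : ContinuousOn Ψ (Ici r0) := by fun_prop
  have hΨi : IntegrableOn Ψ (Ioi r0) := by
    refine IntegrableOn.congr_fun (hgi.const_mul (1/2)) (fun r hr => ?_) measurableSet_Ioi
    simp only [hΨ]
    rw [(rpow_weights (h0.trans hr) δ).2, hs]
  have hΨ0 : ∀ r, r0 ≤ r → 0 ≤ Ψ r := by
    intro r hr
    have := h0.trans_le hr
    positivity
  have hΦ0 : ∀ r, r0 ≤ r → 0 ≤ Φ r := by
    intro r hr
    have := h0.trans_le hr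
    positivity
  -- the boundary term of the energy identity
  set E : ℝ → ℝ := fun r => r^s * (f r * (r*(r-2*m0) * f1 r) - s/2*(r-2*m0) * (f r * f r)) with hE
  have hEd : ∀ r, r0 ≤ r → ∃ e, HasDerivWithinAt E e (Ici r0) r ∧ Φ r - Ψ r ≤ e := by
    intro r hr
    have hp : 0 < r := h0.trans_le hr
    have hY : HasDerivWithinAt (fun r => s/2*(r-2*m0)) (s/2*1) (Ici r0) r :=
      (((hasDerivAt_id r).sub_const _).const_mul _).hasDerivWithinAt
    refine ⟨_, (Real.hasDerivAt_rpow_const (p := s) (Or.inl hp.ne')).hasDerivWithinAt.mul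
      (((h r hr).1.mul (hasDerivWithinAt_flux hm0 hr0 h hr)).sub
        (hY.mul ((h r hr).1.mul (h r hr).1))), ?_⟩
    simp only [hΦ, hΨ]
    rw [Real.rpow_sub_one hp.ne']
    have hX : 0 < r^s := Real.rpow_pos_of_pos hp s
    generalize r^s = X at hX ⊢
    have hb1 := (hb r hr).1
    have hb2 := (hb r hr).2
    have hq : 0 ≤ r - 2*m0 := by linarith
    have e : s * (X / r) * (f r * (r * (r - 2*m0) * f1 r) - s / 2 * (r - 2*m0) * (f r * f r)) +
        X * (f1 r * (r * (r - 2*m0) * f1 r) + f r * (lam * f r + r * (r - 2*m0) * g r) -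
          (s / 2 * 1 * (f r * f r) + s / 2 * (r - 2*m0) * (f1 r * f r + f r * f1 r))) =
        X * (r * (r-2*m0) * f1 r ^ 2 + (lam - s/2 - s^2/2 * ((r-2*m0)/r)) * f r ^ 2
          + f r * (r*(r-2*m0)*g r)) := by
      field_simp
      ring
    rw [e]
    have h1 : (r-2*m0)/r ≤ 1 := by rw [div_le_one hp]; linarith
    have h2 : 1 ≤ lam - s/2 - s^2/2 * ((r-2*m0)/r) := by
      have : s^2/2 * ((r-2*m0)/r) ≤ s^2/2 * 1 := by gcongr
      nlinarith
    have h3 : (r*(r-2*m0)*g r)^2 ≤ r^4 * g r ^ 2 := by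
      rw [mul_pow]
      have : (r*(r-2*m0))^2 ≤ (r^2)^2 := by gcongr
      have h5 := mul_le_mul_of_nonneg_right this (sq_nonneg (g r))
      linarith [show (r^2)^2 * g r ^ 2 = r^4 * g r ^ 2 by ring]
    have h4 := mul_le_mul_of_nonneg_right hb1 (sq_nonneg (f1 r))
    have h5 := mul_le_mul_of_nonneg_right h2 (sq_nonneg (f r))
    have h6 := sq_nonneg (f r + r*(r-2*m0)*g r)
    have h7 : κ * r^2 * f1 r ^ 2 + 1/2 * f r ^ 2 - 1/2 * (r^4 * g r ^ 2) ≤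
        r * (r-2*m0) * f1 r ^ 2 + (lam - s/2 - s^2/2 * ((r-2*m0)/r)) * f r ^ 2
          + f r * (r*(r-2*m0)*g r) := by linarith
    have h8 := mul_le_mul_of_nonneg_left h7 hX.le
    linarith
  choose! E' hE' using hEd
  have hEb : ∀ r, r0 ≤ r → E r ≤ C * K := by
    intro r hr
    have hp : 0 < r := h0.trans_le hr
    have hX : 0 < r^s := Real.rpow_pos_of_pos hp s
    have hfr := hf r hr
    have hf1r := hf1 r hr
    have h1 : 0 ≤ s/2*(r-2*m0) * (f r * f r) :=
      mul_nonneg (mul_nonneg (by linarith) (by linarith)) (mul_self_nonneg _)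
    have hq : 0 ≤ r*(r-2*m0) := mul_nonneg hp.le (by linarith)
    have h2 : f r * (r*(r-2*m0) * f1 r) ≤ (C * r^δ) * (r^2 * (K * r^(δ-1))) := by
      refine (le_abs_self _).trans ?_
      rw [abs_mul, abs_mul, abs_of_nonneg hq]
      exact mul_le_mul hfr (mul_le_mul (hb r hr).2 hf1r (abs_nonneg _) (sq_nonneg _))
        (by positivity) ((abs_nonneg _).trans hfr)
    have h3 : r^s * (r^δ * (r^2 * r^(δ-1))) = 1 := by
      rw [← Real.rpow_natCast r 2, ← Real.rpow_add hp, ← Real.rpow_add hp, ← Real.rpow_add hp,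
        show s + (δ + ((2:ℕ) + (δ - 1))) = 0 by rw [hs]; push_cast; ring, Real.rpow_zero]
    calc E r ≤ r^s * ((C * r^δ) * (r^2 * (K * r^(δ-1)))) := by
          apply mul_le_mul_of_nonneg_left _ hX.le
          linarith
      _ = C * K * (r^s * (r^δ * (r^2 * r^(δ-1)))) := by ring
      _ = C * K := by rw [h3, mul_one]
  have hΦi : IntegrableOn Φ (Ioi r0) := by
    refine integrableOn_Ioi_of_intervalIntegral_norm_bounded (l := Filter.atTop) (b := id)
      (C * K - E r0 + ∫ r in Ioi r0, Ψ r) r0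
      (fun R => ?_) Filter.tendsto_id ?_
    · exact ((hΦc.mono Icc_subset_Ici_self).integrableOn_Icc).mono_set Ioc_subset_Icc_self
    · filter_upwards [Filter.eventually_ge_atTop r0] with R hR
      have hi1 : IntegrableOn Φ (Icc r0 R) := (hΦc.mono Icc_subset_Ici_self).integrableOn_Icc
      have hi2 : IntegrableOn Ψ (Icc r0 R) := (hΨc.mono Icc_subset_Ici_self).integrableOn_Icc
      have key := intervalIntegral.integral_le_sub_of_hasDeriv_right_of_le (g := E) (g' := E')
        (φ := fun r => Φ r - Ψ r) hR
        (fun r hr => ((hE' r hr.1).1.mono Icc_subset_Ici_self).continuousWithinAt)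
        (fun r hr => (hE' r hr.1.le).1.mono (Ioi_subset_Ici hr.1.le))
        (hi1.sub hi2) (fun r hr => (hE' r hr.1.le).2)
      rw [intervalIntegral.integral_sub
        ((intervalIntegrable_iff_integrableOn_Icc_of_le hR).2 hi1)
        ((intervalIntegrable_iff_integrableOn_Icc_of_le hR).2 hi2)] at key
      have hΨle : ∫ r in r0..R, Ψ r ≤ ∫ r in Ioi r0, Ψ r := by
        rw [intervalIntegral.integral_of_le hR]
        apply setIntegral_mono_set hΨi
        · filter_upwards [ae_restrict_mem measurableSet_Ioi] with t ht
          exact hΨ0 t (le_of_lt ht)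
        · exact Ioc_subset_Ioi_self.eventuallyLE
      have hn : ∫ r in r0..id R, ‖Φ r‖ = ∫ r in r0..R, Φ r := by
        apply intervalIntegral.integral_congr
        intro t ht
        rw [id, uIcc_of_le hR] at ht
        exact Real.norm_of_nonneg (hΦ0 t ht.1)
      rw [hn]
      linarith [hEb R hR]
  constructor
  · apply Integrable.mono' (hΦi.const_mul 2)
    · refine ContinuousOn.aestronglyMeasurable ?_ measurableSet_Ioi
      exact ((continuousOn_rpow_Ici h0 _).mul (hfc.pow 2)).mono Ioi_subset_Ici_self
    · filter_upwards [ae_restrict_mem measurableSet_Ioi] with r hr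
      have hp : 0 < r := h0.trans hr
      rw [← hs, Real.norm_of_nonneg (by positivity)]
      have : 0 ≤ r^s * (κ * r^2 * f1 r ^ 2) := by positivity
      simp only [hΦ]
      linarith
  · apply Integrable.mono' (hΦi.const_mul (1/κ))
    · refine ContinuousOn.aestronglyMeasurable ?_ measurableSet_Ioi
      exact ((continuousOn_rpow_Ici h0 _).mul (hf1c.pow 2)).mono Ioi_subset_Ici_self
    · filter_upwards [ae_restrict_mem measurableSet_Ioi] with r hr
      have hp : 0 < r := h0.trans hr
      rw [Real.norm_of_nonneg (by positivity), (rpow_weights hp δ).1, ← hs]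
      have : 0 ≤ r^s * (1/2 * f r ^ 2) := by positivity
      simp only [hΦ]
      rw [div_mul_eq_mul_div, one_mul, le_div_iff₀ hκ]
      linarith

/-- Bound for `f''` as given by the equation, with `x = f`, `y = f'`, `z = g`. -/
theorem second_deriv_bound {r0 m0 lam : ℝ} (hm0 : 0 < m0) (hr0 : 2*m0 < r0) (hlam : 0 ≤ lam) :
    ∃ A B, 0 ≤ A ∧ 0 ≤ B ∧ ∀ r, r0 ≤ r → ∀ x y z : ℝ,
      r^2 * |z - 2*(r - m0)/(r*(r - 2*m0)) * y + lam/(r*(r - 2*m0)) * x| ≤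
        r^2 * |z| + A * (r * |y|) + B * |x| := by
  obtain ⟨κ, hκ, hb⟩ := weight_bounds hm0 hr0
  refine ⟨2/κ, lam/κ, by positivity, by positivity, fun r hr x y z => ?_⟩
  have hp : 0 < r := by linarith
  have hb1 := (hb r hr).1
  have hκr : 0 < κ * r^2 := by positivity
  have hpp : 0 < r * (r - 2*m0) := hκr.trans_le hb1
  have h1 : 2*(r - m0)/(r*(r - 2*m0)) ≤ 2*r / (κ * r^2) := by gcongr; linarith
  have h1' : 0 ≤ 2*(r - m0)/(r*(r - 2*m0)) := div_nonneg (by linarith) hpp.le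
  have h2 : lam/(r*(r - 2*m0)) ≤ lam / (κ * r^2) :=
    div_le_div_of_nonneg_left hlam hκr hb1
  have h2' : 0 ≤ lam/(r*(r - 2*m0)) := div_nonneg hlam hpp.le
  have h3 : |z - 2*(r - m0)/(r*(r - 2*m0)) * y + lam/(r*(r - 2*m0)) * x| ≤
      |z| + 2*r / (κ * r^2) * |y| + lam / (κ * r^2) * |x| := by
    refine (abs_add_le _ _).trans (add_le_add ((abs_sub _ _).trans (add_le_add le_rfl ?_)) ?_)
    · rw [abs_mul, abs_of_nonneg h1']; gcongr
    · rw [abs_mul, abs_of_nonneg h2']; gcongr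
  calc _ ≤ r^2 * (|z| + 2*r / (κ * r^2) * |y| + lam / (κ * r^2) * |x|) := by gcongr
    _ = _ := by field_simp

/-- If `g` has finite weighted norms, a solution that is `O(r^δ)` lies in `H²_δ ∩ C²_δ`. -/
theorem memH2C2_of_sol {r0 m0 lam δ C D : ℝ} (hm0 : 0 < m0) (hr0 : 2*m0 < r0) (hlam : 2 ≤ lam)
    (hδ1 : -1 < δ) (hδ2 : δ < -(1/2)) {g f f1 : ℝ → ℝ} (hgc : ContinuousOn g (Ici r0))
    (hgi : IntegrableOn (fun r => r ^ (-2*(δ-2)-1) * (g r)^2) (Ioi r0))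
    (hD : 0 ≤ D) (hg : ∀ r, r0 ≤ r → |g r| ≤ D * r ^ (δ-2))
    (h : SolOn r0 m0 lam g f f1) (hf : ∀ r, r0 ≤ r → |f r| ≤ C * r ^ δ) :
    MemH2C2 r0 δ f ∧ ∀ r, r0 ≤ r → d1 r0 f r = f1 r ∧
      d2 r0 f r = g r - 2*(r - m0)/(r*(r - 2*m0)) * f1 r + lam/(r*(r - 2*m0)) * f r := by
  have h0 : 0 < r0 := by linarith
  obtain ⟨hfc, hf1c⟩ := h.continuousOn
  have hpp : ∀ r ∈ Ici r0, r * (r - 2*m0) ≠ 0 := fun r hr =>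
    (mul_pos (h0.trans_le hr) (by linarith [mem_Ici.1 hr])).ne'
  set f2 : ℝ → ℝ := fun r => g r - 2*(r - m0)/(r*(r - 2*m0)) * f1 r + lam/(r*(r - 2*m0)) * f r
    with hf2
  have hf2c : ContinuousOn f2 (Ici r0) :=
    (hgc.sub ((ContinuousOn.div (by fun_prop) (by fun_prop) hpp).mul hf1c)).add
      ((ContinuousOn.div (by fun_prop) (by fun_prop) hpp).mul hfc)
  obtain ⟨hcd, hd1, hd2⟩ := calc_of_hasDeriv (fun r hr => (h r hr).1) (fun r hr => (h r hr).2) hf2c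
  obtain ⟨K, hK, hf1⟩ := deriv_bound hm0 hr0 (by linarith) hδ1 h hf hg
  obtain ⟨A, B, hA, hB, hAB⟩ := second_deriv_bound (lam := lam) hm0 hr0 (by linarith)
  obtain ⟨i0, i1⟩ := energy_estimate hm0 hr0 hlam hδ1 hδ2 hgc hgi h hf hf1
  have hd1c : ContinuousOn (d1 r0 f) (Ici r0) := hf1c.congr hd1
  have hd2c : ContinuousOn (d2 r0 f) (Ici r0) := hf2c.congr hd2
  have hC : 0 ≤ C := by
    have := (abs_nonneg _).trans (hf r0 le_rfl)
    exact nonneg_of_mul_nonneg_left this (Real.rpow_pos_of_pos h0 _)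
  refine ⟨⟨hcd, (wL2_iff h0 hfc).2 i0, (wL2_iff h0 hd1c).2 ?_, (wL2_iff h0 hd2c).2 ?_,
    (wC0_iff h0).2 ⟨C, hC, hf⟩, (wC0_iff h0).2 ⟨K, hK, fun r hr => hd1 r hr ▸ hf1 r hr⟩,
    (wC0_iff h0).2 ⟨D + A * K + B * C, by positivity, fun r hr => ?_⟩⟩,
    fun r hr => ⟨hd1 r hr, hd2 r hr⟩⟩
  · exact i1.congr_fun (fun r hr => by simp only [hd1 r (le_of_lt hr)]) measurableSet_Ioi
  · apply Integrable.mono' (((hgi.const_mul 3).add (i1.const_mul (3*A^2))).add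
      (i0.const_mul (3*B^2)))
    · refine ContinuousOn.aestronglyMeasurable ?_ measurableSet_Ioi
      exact ((continuousOn_rpow_Ici h0 _).mul (hd2c.pow 2)).mono Ioi_subset_Ici_self
    · filter_upwards [ae_restrict_mem measurableSet_Ioi] with r hr
      have hp : 0 < r := h0.trans hr
      obtain ⟨w1, w2⟩ := rpow_weights hp δ
      have hb := hAB r (le_of_lt hr) (f r) (f1 r) (g r)
      rw [Real.norm_of_nonneg (by positivity), hd2 r (le_of_lt hr)]
      simp only [Pi.add_apply]
      rw [w1, w2]
      have hX : 0 < r^(-2*δ-1) := Real.rpow_pos_of_pos hp _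
      have hsq : (r^2 * |f2 r|)^2 ≤ 3 * (r^2 * |g r|)^2 + 3 * (A * (r * |f1 r|))^2
          + 3 * (B * |f r|)^2 := by
        refine (pow_le_pow_left₀ (by positivity) hb 2).trans ?_
        nlinarith [sq_nonneg (r^2 * |g r| - A * (r * |f1 r|)), sq_nonneg (r^2 * |g r| - B * |f r|),
          sq_nonneg (A * (r * |f1 r|) - B * |f r|)]
      simp only [mul_pow, sq_abs] at hsq
      have := mul_le_mul_of_nonneg_left hsq hX.le
      linarith
  · have hp : 0 < r := h0.trans_le hr
    have hb := hAB r hr (f r) (f1 r) (g r)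
    rw [hd2 r hr]
    have h1 : r^2 * |f2 r| ≤ r^2 * (D * r^(δ-2)) + A * (r * (K * r^(δ-1))) + B * (C * r^δ) := by
      refine hb.trans ?_
      gcongr
      · exact hg r hr
      · exact hf1 r hr
      · exact hf r hr
    have h2 : r^2 * (D * r^(δ-2)) + A * (r * (K * r^(δ-1))) + B * (C * r^δ) =
        r^2 * ((D + A * K + B * C) * r^(δ-2)) := by
      have e1 := mul_rpow_sub_one hp δ
      have e2 := sq_mul_rpow_sub_two hp δ
      linear_combination A * K * (e1 - e2) - B * C * e2
    rw [h2] at h1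
    exact le_of_mul_le_mul_left h1 (by positivity)

theorem SolOn.sub {r0 m0 lam : ℝ} {g f f1 h h1 : ℝ → ℝ} (hf : SolOn r0 m0 lam g f f1)
    (hh : SolOn r0 m0 lam g h h1) :
    SolOn r0 m0 lam (fun _ => 0) (fun r => f r - h r) (fun r => f1 r - h1 r) := fun r hr =>
  ⟨(hf r hr).1.sub (hh r hr).1, ((hf r hr).2.sub (hh r hr).2).congr_deriv (by ring)⟩

/-! ### The boundary value problem -/

theorem stmt0 (m0 r0 δ : ℝ) (hm0 : 0 < m0) (hr0 : 2*m0 < r0)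
    (hδ1 : -1 < δ) (hδ2 : δ < -(1/2))
    (l : ℤ) (hl : 1 ≤ l)
    (g : ℝ → ℝ) (hg : ContinuousOn g (Set.Ici r0))
    (hgL : wL2 r0 (δ-2) g ≠ ⊤) (hgC : wC0 r0 (δ-2) g ≠ ⊤)
    (v : ℝ) :
    ∃ f : ℝ → ℝ,
      (MemH2C2 r0 δ f ∧ (∀ r, r0 ≤ r → Lop r0 m0 l f r = g r) ∧ f r0 = v) ∧
      ∀ f₂ : ℝ → ℝ,
        (MemH2C2 r0 δ f₂ ∧ (∀ r, r0 ≤ r → Lop r0 m0 l f₂ r = g r) ∧ f₂ r0 = v) →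
        ∀ r, r0 ≤ r → f₂ r = f r := by

  have h0 : 0 < r0 := by linarith
  have hl' : (1:ℝ) ≤ l := by exact_mod_cast hl
  have hlam : 2 ≤ (l:ℝ) * ((l:ℝ)+1) := by nlinarith
  have hgi := (wL2_iff h0 hg).1 hgL
  obtain ⟨D, hD, hgD⟩ := (wC0_iff h0).1 hgC
  obtain ⟨f, f1, C, hf, hv, hfC⟩ :=
    exists_decaying (v := v) hm0 hr0 hδ1 (by linarith) l hl hg hD hgD
  obtain ⟨hmem, hder⟩ := memH2C2_of_sol hm0 hr0 hlam hδ1 hδ2 hg hgi hD hgD hf hfC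
  refine ⟨f, ⟨hmem, fun r hr => ?_, hv⟩, ?_⟩
  · rw [Lop, (hder r hr).1, (hder r hr).2]
    ring
  · rintro f₂ ⟨⟨hcd, -, -, -, hb, -, -⟩, hL, hv₂⟩ r hr
    obtain ⟨C₂, -, hC₂⟩ := (wC0_iff h0).1 hb
    obtain ⟨e1, e2⟩ := hasDeriv_of_contDiff hcd
    have hf₂ : SolOn r0 m0 ((l:ℝ) * ((l:ℝ)+1)) g f₂ (d1 r0 f₂) := fun r hr =>
      ⟨e1 r hr, (e2 r hr).congr_deriv (by rw [← hL r hr, Lop]; ring)⟩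
    have := eq_zero_of_decay (C := C₂ + C) (δ := δ) hm0 hr0 (by linarith) (by linarith)
      (hf₂.sub hf) (fun r hr => by
        have h1 := abs_sub (f₂ r) (f r)
        have h2 := hC₂ r hr
        have h3 := hfC r hr
        linarith) (by rw [hv₂, hv, sub_self]) hr
    linarith
end

section
/- There exists a constant C > 0 depending only on r0, m0 and δ such that for every integer ℓ ≥ 1 and every function f belonging to H²_δ ∩ C²_δ one has ‖f''‖²_{L²_{δ-2}} + (1+ℓ(ℓ+1))·‖f'‖²_{L²_{δ-1}} + (1+ℓ(ℓ+1))²·‖f‖²_{L²_δ} ≤ C·( ‖L_ℓ f‖²_{L²_{δ-2}} + (1+ℓ(ℓ+1))^{3/2}·f(r0)² ). -/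
/-!
Write `K = ℓ(ℓ+1)`, `P = r(r - 2m)`, `a = -2δ - 1 ∈ (0,1)`, `w = r^a` and
`g = P · L_ℓ f = (P f')' - K f`. The norms in question are `∫ w f²`, `∫ w r² f'²`, `∫ w r⁴ f''²`,
and `∫ w g² ≤ ‖L_ℓ f‖²`.

* Energy identity (`energy_estimate`): testing the equation with `w f` and integrating by parts
  twice gives `∫ w P f'² + K ∫ w f² - ½ ∫ (P w')' f² = - ∫ w g f + boundary`. Since
  `½ (P w')' ≤ w` and `K ≥ 2`, the zeroth order term stays coercive. The boundary term at `r0`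
  contains `f(r0) f'(r0)`.
* Trace estimate (`trace_estimate`): integrating the derivative of `(w/r) (P f')²` controls
  `√K f'(r0)²` by `K ∫ w P f'² + ∫ w g² + K² ∫ w f²`. By Young's inequality
  `K |f f'|(r0) ≤ ε √K f'(r0)² + C K^{3/2} f(r0)²`, so the boundary term is absorbed
  (`first_order_estimate`).
* The bound on `f''` is read off from the equation.

Boundary terms at infinity vanish because the boundary function `F` has integrable derivative,
hence a limit, and `F / r` is integrable, which forces the limit to be zero
(`integral_deriv_eq_neg`). The weight enters only through `w > 0` and `w' = a w / r`.
-/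

open Set MeasureTheory
open scoped ENNReal

/-! ### Boundary terms at infinity -/

/-- Fundamental theorem of calculus on `[r0, ∞)` with no boundary term at infinity: `F` has a limit
since `F'` is integrable, and the limit is zero since `1 / r` is not integrable. -/
lemma integral_deriv_eq_neg {F F' : ℝ → ℝ} {r0 : ℝ} (hr0 : 0 < r0)
    (hc : ContinuousOn F (Ici r0)) (hd : ∀ r ∈ Ioi r0, HasDerivAt F (F' r) r)
    (hi' : IntegrableOn F' (Ioi r0)) (hi : IntegrableOn (fun r => F r / r) (Ioi r0)) :
    ∫ r in Ioi r0, F' r = - F r0 := by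
  have hlim := tendsto_limUnder_of_hasDerivAt_of_integrableOn_Ioi hd hi'
  set L := Filter.atTop.limUnder F
  have hL : L = 0 := by
    by_contra hL
    have hpos : 0 < |L| := abs_pos.mpr hL
    have hev : ∀ᶠ r in Filter.atTop, |L| / 2 < |F r| :=
      hlim.abs.eventually_const_lt (by linarith)
    obtain ⟨R, hR⟩ := Filter.eventually_atTop.mp hev
    set R' := max R r0
    have hsub : Ioi R' ⊆ Ioi r0 := Ioi_subset_Ioi (le_max_right _ _)
    have h1 : IntegrableOn (fun r : ℝ => r⁻¹) (Ioi R') := by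
      refine Integrable.mono' (((hi.mono_set hsub).norm).const_mul (2 / |L|)) ?_ ?_
      · exact measurable_inv.aestronglyMeasurable
      · refine (ae_restrict_iff' measurableSet_Ioi).mpr (Filter.Eventually.of_forall ?_)
        intro r hr
        have hr1 : r0 < r := hsub hr
        have hr2 : R ≤ r := (le_max_left _ _).trans (le_of_lt hr)
        have hr3 : 0 < r := hr0.trans hr1
        have := hR r hr2
        rw [Real.norm_eq_abs, Real.norm_eq_abs, abs_div, abs_inv, abs_of_pos hr3]
        rw [show 2 / |L| * (|F r| / r) = (|F r| * 2 / |L|) * r⁻¹ by ring]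
        refine le_mul_of_one_le_left (by positivity) ?_
        rw [le_div_iff₀ hpos]
        linarith
    exact not_integrableOn_Ioi_inv h1
  rw [integral_Ioi_of_hasDerivAt_of_tendsto (hc r0 self_mem_Ici) hd hi' hlim, hL]
  ring

/-! ### Weighted integrability -/

/-- A weight `w` with `w' = a w / r`, and a function `f` with derivatives `f1`, `f2` on `[r0, ∞)`
such that `w f²`, `w r² f1²`, `w r⁴ f2²` are integrable. -/
structure WeightedData (m r0 a : ℝ) (w f f1 f2 : ℝ → ℝ) : Prop where
  hm : 0 < m
  hr0 : 2 * m < r0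
  ha0 : 0 < a
  ha1 : a < 1
  wpos : ∀ r ∈ Ici r0, 0 < w r
  wc : ContinuousOn w (Ici r0)
  wd : ∀ r ∈ Ioi r0, HasDerivAt w (a * w r / r) r
  fc : ContinuousOn f (Ici r0)
  f1c : ContinuousOn f1 (Ici r0)
  f2c : ContinuousOn f2 (Ici r0)
  fd : ∀ r ∈ Ioi r0, HasDerivAt f (f1 r) r
  f1d : ∀ r ∈ Ioi r0, HasDerivAt f1 (f2 r) r
  i0 : IntegrableOn (fun r => w r * f r ^ 2) (Ioi r0)
  i1 : IntegrableOn (fun r => w r * r ^ 2 * f1 r ^ 2) (Ioi r0)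
  i2 : IntegrableOn (fun r => w r * r ^ 4 * f2 r ^ 2) (Ioi r0)

/-- `P · L_ℓ f = (P f')' - K f` with `P = r (r - 2m)` and `K = ℓ (ℓ + 1)`. -/
def gOp (m K : ℝ) (f f1 f2 : ℝ → ℝ) (r : ℝ) : ℝ :=
  r * (r - 2 * m) * f2 r + 2 * (r - m) * f1 r - K * f r

namespace WeightedData

variable {m r0 a : ℝ} {w f f1 f2 : ℝ → ℝ}

lemma r0_pos (h : WeightedData m r0 a w f f1 f2) : 0 < r0 := by
  have := h.hm; have := h.hr0; linarith

/-- A continuous function dominated by the sum of the three integrable densities is integrable. -/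
lemma integrableOn_of_le (h : WeightedData m r0 a w f f1 f2) {u : ℝ → ℝ} (C : ℝ)
    (hc : ContinuousOn u (Ici r0))
    (hb : ∀ r ∈ Ioi r0, |u r| ≤
      C * (w r * (f r ^ 2 + (r * f1 r) ^ 2 + (r ^ 2 * f2 r) ^ 2))) :
    IntegrableOn u (Ioi r0) := by
  refine Integrable.mono' (((h.i0.add h.i1).add h.i2).const_mul C)
    ((hc.mono Ioi_subset_Ici_self).aestronglyMeasurable measurableSet_Ioi) ?_
  refine (ae_restrict_iff' measurableSet_Ioi).mpr (Filter.Eventually.of_forall ?_)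
  intro r hr
  refine (hb r hr).trans (le_of_eq ?_)
  simp only [Pi.add_apply]
  ring

lemma gOp_continuousOn (h : WeightedData m r0 a w f f1 f2) (K : ℝ) :
    ContinuousOn (gOp m K f f1 f2) (Ici r0) := by
  have := h.fc; have := h.f1c; have := h.f2c
  unfold gOp
  fun_prop

/-- With `q = P / r² ∈ (0, 1)`, the identity expressing `g` in the scale invariant quantities
`r f'` and `r² f''`. -/
lemma exists_q (h : WeightedData m r0 a w f f1 f2) {r : ℝ} (hr : r0 < r) :
    ∃ q : ℝ, 1 - 2 * m / r0 ≤ q ∧ 0 < q ∧ q ≤ 1 ∧ r - 2 * m = q * r ∧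
      ∀ K, gOp m K f f1 f2 r = q * (r ^ 2 * f2 r) + (1 + q) * (r * f1 r) - K * f r := by
  have hm := h.hm
  have h0 := h.hr0
  have hp := h.r0_pos
  have hr' : 0 < r := hp.trans hr
  refine ⟨1 - 2 * m / r, ?_, ?_, ?_, ?_, ?_⟩
  · have : 2 * m / r ≤ 2 * m / r0 := by gcongr
    linarith
  · rw [sub_pos, div_lt_one hr']; linarith
  · have : 0 < 2 * m / r := by positivity
    linarith
  · field_simp
  · intro K
    unfold gOp
    field_simp
    ring

lemma integrableOn_g (h : WeightedData m r0 a w f f1 f2) (K : ℝ) :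
    IntegrableOn (fun r => w r * gOp m K f f1 f2 r ^ 2) (Ioi r0) := by
  refine h.integrableOn_of_le (3 * (1 + 4 + K ^ 2)) ?_ ?_
  · have := h.gOp_continuousOn K; have := h.wc
    fun_prop
  intro r hr
  obtain ⟨q, -, hq0, hq1, -, hg⟩ := h.exists_q hr
  have hw := h.wpos r (Ioi_subset_Ici_self hr)
  rw [hg K, abs_of_nonneg (by positivity),
    mul_left_comm (3 * (1 + 4 + K ^ 2)) (w r)]
  refine mul_le_mul_of_nonneg_left ?_ hw.le
  generalize r * f1 r = y
  generalize r ^ 2 * f2 r = z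
  generalize f r = x
  have e1 : (q * z + (1 + q) * y - K * x) ^ 2
      ≤ 3 * ((q * z) ^ 2 + ((1 + q) * y) ^ 2 + (K * x) ^ 2) := by
    nlinarith [sq_nonneg (q * z - (1 + q) * y), sq_nonneg (q * z + K * x),
      sq_nonneg ((1 + q) * y + K * x)]
  have e2 : (q * z) ^ 2 ≤ z ^ 2 := by
    rw [mul_pow]; exact mul_le_of_le_one_left (sq_nonneg _) (by nlinarith)
  have e3 : ((1 + q) * y) ^ 2 ≤ 4 * y ^ 2 := by
    rw [mul_pow]; exact mul_le_mul_of_nonneg_right (by nlinarith) (sq_nonneg _)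
  nlinarith [sq_nonneg x, sq_nonneg y, sq_nonneg z, mul_nonneg (sq_nonneg K) (sq_nonneg y),
    mul_nonneg (sq_nonneg K) (sq_nonneg z)]

lemma integrableOn_A (h : WeightedData m r0 a w f f1 f2) :
    IntegrableOn (fun r => w r * (r * (r - 2 * m)) * f1 r ^ 2) (Ioi r0) := by
  refine h.integrableOn_of_le 1 ?_ ?_
  · have := h.f1c; have := h.wc
    fun_prop
  intro r hr
  obtain ⟨q, -, hq0, hq1, hq, -⟩ := h.exists_q hr
  have hw := h.wpos r (Ioi_subset_Ici_self hr)
  rw [hq, show w r * (r * (q * r)) * f1 r ^ 2 = w r * (q * (r * f1 r) ^ 2) by ring,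
    abs_of_nonneg (by positivity), one_mul]
  refine mul_le_mul_of_nonneg_left ?_ hw.le
  nlinarith [sq_nonneg (r * f1 r), sq_nonneg (f r), sq_nonneg (r ^ 2 * f2 r)]

/-! ### Energy and trace estimates -/

/-- The energy estimate, before absorbing the boundary term at `r0`. The boundary function is
`P w f f' - ½ P w' f²`. -/
lemma energy_estimate (h : WeightedData m r0 a w f f1 f2) {K : ℝ} (hK : 2 ≤ K) :
    K * (∫ r in Ioi r0, w r * (r * (r - 2 * m)) * f1 r ^ 2)
      + K ^ 2 / 4 * (∫ r in Ioi r0, w r * f r ^ 2)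
      - (∫ r in Ioi r0, w r * gOp m K f f1 f2 r ^ 2)
    ≤ - (K * (w r0 * (r0 - 2 * m) * (r0 * f r0 * f1 r0 - a / 2 * f r0 ^ 2))) := by
  have := h.wc; have := h.fc; have := h.f1c; have := h.f2c; have := h.gOp_continuousOn K
  have ha0 := h.ha0; have ha1 := h.ha1
  have hne : ∀ x ∈ Ici r0, x ≠ 0 := fun x hx => (h.r0_pos.trans_le hx).ne'
  set F : ℝ → ℝ := fun r => K * (w r * (r - 2 * m) * (r * f r * f1 r - a / 2 * f r ^ 2)) with hF
  set F' : ℝ → ℝ := fun r => K * w r * (gOp m K f f1 f2 r * f r + r * (r - 2 * m) * f1 r ^ 2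
    + K * f r ^ 2 - a / 2 * (1 + a * (r - 2 * m) / r) * f r ^ 2) with hF'
  have hFc : ContinuousOn F (Ici r0) := by fun_prop
  have hF'c : ContinuousOn F' (Ici r0) := by
    have : ContinuousOn (fun r => a * (r - 2 * m) / r) (Ici r0) :=
      ContinuousOn.div (by fun_prop) (by fun_prop) hne
    fun_prop
  have hd : ∀ r ∈ Ioi r0, HasDerivAt F (F' r) r := by
    intro r hr
    have hr' : r ≠ 0 := hne r (Ioi_subset_Ici_self hr)
    have hw := h.wd r hr
    have hf := h.fd r hr
    have hf1 := h.f1d r hr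
    have hid := hasDerivAt_id r
    have := (((hw.mul (hid.sub_const (2 * m))).mul
      (((hid.mul hf).mul hf1).sub ((hf.pow 2).const_mul (a / 2)))).const_mul K)
    refine HasDerivAt.congr_deriv (f := F) this ?_
    simp only [hF', gOp, Pi.mul_apply, Pi.sub_apply, Pi.pow_apply, id]
    field_simp
    ring
  have hi : IntegrableOn (fun r => F r / r) (Ioi r0) := by
    refine h.integrableOn_of_le (K * 2) (hFc.div (by fun_prop) hne) ?_
    intro r hr
    obtain ⟨q, -, hq0, hq1, hq, -⟩ := h.exists_q hr
    have hw := h.wpos r (Ioi_subset_Ici_self hr)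
    have hr' : r ≠ 0 := hne r (Ioi_subset_Ici_self hr)
    have : F r / r = K * w r * (q * (f r * (r * f1 r) - a / 2 * f r ^ 2)) := by
      simp only [hF]; rw [hq]; field_simp
    rw [this, abs_mul, abs_of_pos (by positivity : 0 < K * w r), mul_assoc, mul_assoc]
    refine mul_le_mul_of_nonneg_left ?_ (by linarith)
    rw [mul_left_comm (2 : ℝ) (w r)]
    refine mul_le_mul_of_nonneg_left ?_ hw.le
    generalize r * f1 r = y
    generalize r ^ 2 * f2 r = z
    generalize f r = x
    rw [abs_mul, abs_of_pos hq0]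
    have e : |x * y - a / 2 * x ^ 2| ≤ 2 * (x ^ 2 + y ^ 2 + z ^ 2) := by
      rw [abs_le]
      constructor <;> nlinarith [sq_nonneg (x + y), sq_nonneg (x - y), sq_nonneg x, sq_nonneg y,
        sq_nonneg z, mul_nonneg ha0.le (sq_nonneg x), mul_nonneg (sub_pos.2 ha1).le (sq_nonneg x)]
    exact (mul_le_of_le_one_left (abs_nonneg _) hq1).trans e
  have hi' : IntegrableOn F' (Ioi r0) := by
    have hgf : IntegrableOn (fun r => w r * gOp m K f f1 f2 r * f r) (Ioi r0) := by
      refine Integrable.mono' ((h.integrableOn_g K).add h.i0)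
        ((ContinuousOn.mono (by fun_prop) Ioi_subset_Ici_self).aestronglyMeasurable
          measurableSet_Ioi) ?_
      refine (ae_restrict_iff' measurableSet_Ioi).mpr (Filter.Eventually.of_forall ?_)
      intro r hr
      have hw := h.wpos r (Ioi_subset_Ici_self hr)
      simp only [Pi.add_apply]
      rw [Real.norm_eq_abs, mul_assoc, abs_mul, abs_of_pos hw, ← mul_add]
      refine mul_le_mul_of_nonneg_left ?_ hw.le
      rw [abs_le]
      constructor <;> nlinarith [sq_nonneg (gOp m K f f1 f2 r + f r),
        sq_nonneg (gOp m K f f1 f2 r - f r), sq_nonneg (f r), sq_nonneg (gOp m K f f1 f2 r)]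
    have hlast : IntegrableOn (fun r => w r * (1 + a * (r - 2 * m) / r) * f r ^ 2) (Ioi r0) := by
      refine h.integrableOn_of_le 2 ?_ ?_
      · have : ContinuousOn (fun r => a * (r - 2 * m) / r) (Ici r0) :=
          ContinuousOn.div (by fun_prop) (by fun_prop) hne
        fun_prop
      intro r hr
      obtain ⟨q, -, hq0, hq1, hq, -⟩ := h.exists_q hr
      have hw := h.wpos r (Ioi_subset_Ici_self hr)
      have hr' : r ≠ 0 := hne r (Ioi_subset_Ici_self hr)
      rw [hq, show a * (q * r) / r = a * q by field_simp, abs_of_nonneg (by positivity),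
        mul_left_comm, mul_assoc]
      refine mul_le_mul_of_nonneg_left ?_ hw.le
      have : a * q ≤ 1 := by nlinarith
      nlinarith [sq_nonneg (r * f1 r), sq_nonneg (f r), sq_nonneg (r ^ 2 * f2 r)]
    have := (((hgf.const_mul K).add (h.integrableOn_A.const_mul K)).add
      (h.i0.const_mul (K ^ 2))).sub (hlast.const_mul (K * (a / 2)))
    refine this.congr (Filter.Eventually.of_forall fun r => ?_)
    simp only [hF', Pi.add_apply, Pi.sub_apply]
    ring
  have key := integral_deriv_eq_neg h.r0_pos hFc hd hi' hi
  have iA := h.integrableOn_A.const_mul K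
  have iB := h.i0.const_mul (K ^ 2 / 4)
  have iG := h.integrableOn_g K
  have iAB : IntegrableOn (fun r => K * (w r * (r * (r - 2 * m)) * f1 r ^ 2)
      + K ^ 2 / 4 * (w r * f r ^ 2)) (Ioi r0) := iA.add iB
  rw [← key, ← integral_const_mul, ← integral_const_mul, ← integral_add iA iB,
    ← integral_sub iAB iG]
  refine setIntegral_mono_on (iAB.sub iG) hi' measurableSet_Ioi ?_
  intro r hr
  obtain ⟨q, -, hq0, hq1, hq, -⟩ := h.exists_q hr
  have hw := h.wpos r (Ioi_subset_Ici_self hr)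
  have hr' : r ≠ 0 := hne r (Ioi_subset_Ici_self hr)
  simp only [hF']
  rw [hq, show a * (q * r) / r = a * q by field_simp]
  generalize gOp m K f f1 f2 r = g
  generalize f r = x
  have e1 : a / 2 * (1 + a * q) ≤ 1 := by
    have : a * q ≤ 1 := by nlinarith
    nlinarith
  have e2 : 0 ≤ K * g * x + K ^ 2 / 4 * x ^ 2 + g ^ 2 := by nlinarith [sq_nonneg (K * x / 2 + g)]
  have e3 : 0 ≤ K * ((K / 2 - a / 2 * (1 + a * q)) * x ^ 2) :=
    mul_nonneg (by linarith) (mul_nonneg (by linarith) (sq_nonneg _))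
  nlinarith [mul_nonneg hw.le e2, mul_nonneg hw.le e3]

/-- Control of the boundary derivative; here `s = √K`. The boundary function is
`(w / r) (P f')² = w r (r - 2m)² f'²`. -/
lemma trace_estimate (h : WeightedData m r0 a w f f1 f2) {s : ℝ} (hs : 1 ≤ s) :
    s * (w r0 * r0 * (r0 - 2 * m) ^ 2 * f1 r0 ^ 2) ≤
    3 * s ^ 2 * (∫ r in Ioi r0, w r * (r * (r - 2 * m)) * f1 r ^ 2)
      + (s ^ 2) ^ 2 * (∫ r in Ioi r0, w r * f r ^ 2)
      + (∫ r in Ioi r0, w r * gOp m (s ^ 2) f f1 f2 r ^ 2) := by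
  have := h.wc; have := h.fc; have := h.f1c; have := h.f2c; have := h.gOp_continuousOn (s ^ 2)
  have ha0 := h.ha0; have ha1 := h.ha1
  have hs0 : 0 < s := by linarith
  have hne : ∀ x ∈ Ici r0, x ≠ 0 := fun x hx => (h.r0_pos.trans_le hx).ne'
  set F : ℝ → ℝ := fun r => s * (w r * r * (r - 2 * m) ^ 2 * f1 r ^ 2) with hF
  set F' : ℝ → ℝ := fun r => s * w r * ((a - 1) * (r - 2 * m) ^ 2 * f1 r ^ 2
    + 2 * (r - 2 * m) * f1 r * (gOp m (s ^ 2) f f1 f2 r + s ^ 2 * f r)) with hF'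
  have hFc : ContinuousOn F (Ici r0) := by fun_prop
  have hF'c : ContinuousOn F' (Ici r0) := by fun_prop
  have hd : ∀ r ∈ Ioi r0, HasDerivAt F (F' r) r := by
    intro r hr
    have hr' : r ≠ 0 := hne r (Ioi_subset_Ici_self hr)
    have hw := h.wd r hr
    have hf1 := h.f1d r hr
    have hid := hasDerivAt_id r
    have := ((((hw.mul hid).mul ((hid.sub_const (2 * m)).pow 2)).mul (hf1.pow 2)).const_mul s)
    refine HasDerivAt.congr_deriv (f := F) this ?_
    simp only [hF', gOp, Pi.mul_apply, Pi.pow_apply, id]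
    field_simp
    ring
  have hi : IntegrableOn (fun r => F r / r) (Ioi r0) := by
    refine h.integrableOn_of_le s (hFc.div (by fun_prop) hne) ?_
    intro r hr
    obtain ⟨q, -, hq0, hq1, hq, -⟩ := h.exists_q hr
    have hw := h.wpos r (Ioi_subset_Ici_self hr)
    have hr' : r ≠ 0 := hne r (Ioi_subset_Ici_self hr)
    have : F r / r = s * (w r * (q ^ 2 * (r * f1 r) ^ 2)) := by
      simp only [hF]; rw [hq]; field_simp
    rw [this, abs_of_nonneg (by positivity)]
    refine mul_le_mul_of_nonneg_left (mul_le_mul_of_nonneg_left ?_ hw.le) (by linarith)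
    have : q ^ 2 ≤ 1 := by nlinarith
    nlinarith [sq_nonneg (r * f1 r), sq_nonneg (f r), sq_nonneg (r ^ 2 * f2 r)]
  have iA := h.integrableOn_A.const_mul (3 * s ^ 2)
  have iB := h.i0.const_mul ((s ^ 2) ^ 2)
  have iG := h.integrableOn_g (s ^ 2)
  have hi' : IntegrableOn F' (Ioi r0) := by
    refine h.integrableOn_of_le (s * 5) hF'c ?_
    intro r hr
    obtain ⟨q, -, hq0, hq1, hq, hg⟩ := h.exists_q hr
    have hw := h.wpos r (Ioi_subset_Ici_self hr)
    simp only [hF']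
    rw [hg, hq, abs_mul, abs_of_pos (by positivity : 0 < s * w r),
      mul_assoc s (w r), mul_assoc s 5]
    refine mul_le_mul_of_nonneg_left ?_ hs0.le
    rw [mul_left_comm (5 : ℝ) (w r)]
    refine mul_le_mul_of_nonneg_left ?_ hw.le
    rw [show (a - 1) * (q * r) ^ 2 * f1 r ^ 2 + 2 * (q * r) * f1 r *
      (q * (r ^ 2 * f2 r) + (1 + q) * (r * f1 r) - s ^ 2 * f r + s ^ 2 * f r)
      = q * ((q * (1 + a) + 2) * (r * f1 r) ^ 2 + 2 * q * ((r * f1 r) * (r ^ 2 * f2 r))) by ring]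
    generalize r * f1 r = y
    generalize r ^ 2 * f2 r = z
    generalize f r = x
    rw [abs_mul, abs_of_pos hq0]
    have e : |(q * (1 + a) + 2) * y ^ 2 + 2 * q * (y * z)| ≤ 5 * y ^ 2 + z ^ 2 := by
      have b0 : 0 ≤ q * (1 + a) := by positivity
      have b1 : q * (1 + a) ≤ 2 := by nlinarith
      have b2 : |2 * q * (y * z)| ≤ y ^ 2 + z ^ 2 := by
        rw [abs_le]
        constructor <;> nlinarith [mul_nonneg hq0.le (sq_nonneg (y - z)),
          mul_nonneg hq0.le (sq_nonneg (y + z)),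
          mul_nonneg (sub_nonneg.2 hq1) (sq_nonneg y), mul_nonneg (sub_nonneg.2 hq1) (sq_nonneg z)]
      refine (abs_add_le _ _).trans ?_
      rw [abs_of_nonneg (a := (q * (1 + a) + 2) * y ^ 2) (by positivity)]
      nlinarith [mul_le_mul_of_nonneg_right b1 (sq_nonneg y)]
    refine (mul_le_of_le_one_left (abs_nonneg _) hq1).trans (e.trans ?_)
    linarith [sq_nonneg x, sq_nonneg z]
  have key := integral_deriv_eq_neg h.r0_pos hFc hd hi' hi
  have hFF : s * (w r0 * r0 * (r0 - 2 * m) ^ 2 * f1 r0 ^ 2) = ∫ r in Ioi r0, - F' r := by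
    rw [integral_neg, key, neg_neg]
  have iAB : IntegrableOn (fun r => 3 * s ^ 2 * (w r * (r * (r - 2 * m)) * f1 r ^ 2)
      + (s ^ 2) ^ 2 * (w r * f r ^ 2)) (Ioi r0) := iA.add iB
  rw [hFF, ← integral_const_mul, ← integral_const_mul, ← integral_add iA iB,
    ← integral_add iAB iG]
  refine setIntegral_mono_on hi'.neg (iAB.add iG) measurableSet_Ioi ?_
  intro r hr
  obtain ⟨q, -, hq0, hq1, hq, -⟩ := h.exists_q hr
  have hw := h.wpos r (Ioi_subset_Ici_self hr)
  simp only [hF']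
  generalize gOp m (s ^ 2) f f1 f2 r = g
  rw [hq, show (a - 1) * (q * r) ^ 2 * f1 r ^ 2 + 2 * (q * r) * f1 r * (g + s ^ 2 * f r)
      = q * ((a - 1) * (q * (r * f1 r) ^ 2) + 2 * (r * f1 r) * (g + s ^ 2 * f r)) by ring,
    show 3 * s ^ 2 * (w r * (r * (q * r)) * f1 r ^ 2)
      = w r * (3 * s ^ 2 * (q * (r * f1 r) ^ 2)) by ring]
  generalize r * f1 r = y
  generalize f r = x
  have e1 : 0 ≤ q * (s * y + g) ^ 2 := by positivity
  have e2 : 0 ≤ q * (s * y + s ^ 2 * x) ^ 2 := by positivity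
  have e3 : 0 ≤ (1 - q) * g ^ 2 := mul_nonneg (by linarith) (sq_nonneg _)
  have e4 : 0 ≤ (1 - q) * (s ^ 2 * x) ^ 2 := mul_nonneg (by linarith) (sq_nonneg _)
  have e5 : s * (1 - a) * q ≤ s ^ 2 := by
    have : (1 - a) * q ≤ 1 := by nlinarith
    nlinarith
  have e6 : 0 ≤ (s ^ 2 - s * (1 - a) * q) * (q * y ^ 2) :=
    mul_nonneg (by linarith) (by positivity)
  have e7 : 0 ≤ w r * (q * (s * y + g) ^ 2 + q * (s * y + s ^ 2 * x) ^ 2 + (1 - q) * g ^ 2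
      + (1 - q) * (s ^ 2 * x) ^ 2 + (s ^ 2 - s * (1 - a) * q) * (q * y ^ 2)) :=
    mul_nonneg hw.le (by linarith)
  linarith

/-- The energy estimate with its boundary term absorbed through the trace estimate. -/
lemma first_order_estimate (h : WeightedData m r0 a w f f1 f2) {s : ℝ} (hs : 1 ≤ s)
    (hs2 : 2 ≤ s ^ 2) :
    s ^ 2 * (∫ r in Ioi r0, w r * (r * (r - 2 * m)) * f1 r ^ 2)
      + (s ^ 2) ^ 2 * (∫ r in Ioi r0, w r * f r ^ 2) ≤
    6 * (∫ r in Ioi r0, w r * gOp m (s ^ 2) f f1 f2 r ^ 2)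
      + 30 * (r0 * w r0) * (s ^ 3 * f r0 ^ 2) := by
  have hE := h.energy_estimate hs2
  have hT := h.trace_estimate hs
  have hm := h.hm
  have hr0 := h.hr0
  have hp := h.r0_pos
  have hw := h.wpos r0 self_mem_Ici
  have ha0 := h.ha0; have ha1 := h.ha1
  have hA : 0 ≤ ∫ r in Ioi r0, w r * (r * (r - 2 * m)) * f1 r ^ 2 := by
    refine setIntegral_nonneg measurableSet_Ioi fun r hr => ?_
    have hr' : r0 < r := hr
    have := h.wpos r hr'.le
    have h1 : 0 < r := hp.trans hr'
    have h2 : 0 < r - 2 * m := by linarith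
    positivity
  have hG : 0 ≤ ∫ r in Ioi r0, w r * gOp m (s ^ 2) f f1 f2 r ^ 2 := by
    refine setIntegral_nonneg measurableSet_Ioi fun r hr => ?_
    have := h.wpos r (Ioi_subset_Ici_self hr)
    positivity
  generalize (∫ r in Ioi r0, w r * (r * (r - 2 * m)) * f1 r ^ 2) = A at *
  generalize (∫ r in Ioi r0, w r * f r ^ 2) = B at *
  generalize (∫ r in Ioi r0, w r * gOp m (s ^ 2) f f1 f2 r ^ 2) = G at *
  generalize f r0 = x at *
  -- Young's inequality for `K |f f'|(r0)`, with the small constant `1/16` on the `f'` side.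
  have hY : 0 ≤ s * (w r0 * r0) * ((r0 - 2 * m) * f1 r0 / 4 + 2 * (s * x)) ^ 2 := by positivity
  have hZ : s ^ 2 * (w r0 * (r0 - 2 * m) * (a / 2 * x ^ 2)) ≤ (r0 * w r0) * (s ^ 3 * x ^ 2) / 2 := by
    have h1 : (r0 - 2 * m) * a ≤ r0 := by nlinarith
    have h2 : s ^ 2 ≤ s ^ 3 := by nlinarith [sq_nonneg s]
    have h3 : 0 ≤ w r0 * x ^ 2 := by positivity
    calc s ^ 2 * (w r0 * (r0 - 2 * m) * (a / 2 * x ^ 2))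
        = s ^ 2 * ((r0 - 2 * m) * a) * (w r0 * x ^ 2) / 2 := by ring
      _ ≤ s ^ 3 * r0 * (w r0 * x ^ 2) / 2 := by gcongr
      _ = _ := by ring
  have hA' : 0 ≤ s ^ 2 * A := by positivity
  have hY' : -(s ^ 2 * (w r0 * (r0 - 2 * m) * (r0 * x * f1 r0)))
      ≤ s * (w r0 * r0 * (r0 - 2 * m) ^ 2 * f1 r0 ^ 2) / 16 + 4 * ((r0 * w r0) * (s ^ 3 * x ^ 2)) := by
    linarith
  have hX : 0 ≤ (r0 * w r0) * (s ^ 3 * x ^ 2) := by positivity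
  linarith

/-- The equation solved for `f2`, using `P ≥ (1 - 2m/r0) r²`. -/
lemma second_order_estimate (h : WeightedData m r0 a w f f1 f2) (K : ℝ) :
    (1 - 2 * m / r0) ^ 2 * (∫ r in Ioi r0, w r * r ^ 4 * f2 r ^ 2) ≤
    3 * (∫ r in Ioi r0, w r * gOp m K f f1 f2 r ^ 2)
      + 3 * K ^ 2 * (∫ r in Ioi r0, w r * f r ^ 2)
      + 12 * (∫ r in Ioi r0, w r * r ^ 2 * f1 r ^ 2) := by
  have hc : 0 < 1 - 2 * m / r0 := by
    rw [sub_pos, div_lt_one h.r0_pos]; exact h.hr0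
  have iG := (h.integrableOn_g K).const_mul 3
  have iB := h.i0.const_mul (3 * K ^ 2)
  have i1 := h.i1.const_mul 12
  have iGB : IntegrableOn (fun r => 3 * (w r * gOp m K f f1 f2 r ^ 2)
      + 3 * K ^ 2 * (w r * f r ^ 2)) (Ioi r0) := iG.add iB
  rw [← integral_const_mul, ← integral_const_mul, ← integral_const_mul, ← integral_const_mul,
    ← integral_add iG iB, ← integral_add iGB i1]
  refine setIntegral_mono_on (h.i2.const_mul _) (iGB.add i1) measurableSet_Ioi ?_
  intro r hr
  obtain ⟨q, hcq, hq0, hq1, -, hg⟩ := h.exists_q hr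
  have hw := h.wpos r (Ioi_subset_Ici_self hr)
  have hg := hg K
  generalize gOp m K f f1 f2 r = g at *
  rw [show w r * r ^ 4 * f2 r ^ 2 = w r * (r ^ 2 * f2 r) ^ 2 by ring,
    show w r * r ^ 2 * f1 r ^ 2 = w r * (r * f1 r) ^ 2 by ring]
  generalize r * f1 r = y at *
  generalize r ^ 2 * f2 r = z at *
  generalize f r = x at *
  have hz : q * z = g + K * x - (1 + q) * y := by linarith
  have e1 : (1 - 2 * m / r0) ^ 2 * z ^ 2 ≤ (q * z) ^ 2 := by
    rw [mul_pow]; gcongr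
  have e2 : (q * z) ^ 2 ≤ 3 * (g ^ 2 + (K * x) ^ 2 + ((1 + q) * y) ^ 2) := by
    rw [hz]
    nlinarith [sq_nonneg (g - K * x), sq_nonneg (g + (1 + q) * y),
      sq_nonneg (K * x + (1 + q) * y)]
  have e3 : ((1 + q) * y) ^ 2 ≤ 4 * y ^ 2 := by
    rw [mul_pow]; exact mul_le_mul_of_nonneg_right (by nlinarith) (sq_nonneg _)
  have e4 := mul_le_mul_of_nonneg_left (e1.trans (e2.trans (by linarith :
    _ ≤ 3 * (g ^ 2 + (K * x) ^ 2 + 4 * y ^ 2)))) hw.le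
  linarith

lemma weight_comparison (h : WeightedData m r0 a w f f1 f2) :
    (1 - 2 * m / r0) * (∫ r in Ioi r0, w r * r ^ 2 * f1 r ^ 2)
      ≤ ∫ r in Ioi r0, w r * (r * (r - 2 * m)) * f1 r ^ 2 := by
  rw [← integral_const_mul]
  refine setIntegral_mono_on (h.i1.const_mul _) h.integrableOn_A measurableSet_Ioi ?_
  intro r hr
  obtain ⟨q, hcq, -, -, hq, -⟩ := h.exists_q hr
  have hw := h.wpos r (Ioi_subset_Ici_self hr)
  rw [hq, show w r * (r * (q * r)) * f1 r ^ 2 = q * (w r * r ^ 2 * f1 r ^ 2) by ring]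
  exact mul_le_mul_of_nonneg_right hcq (by positivity)

/-- The full estimate for real integrals, with `s = √K`. -/
lemma main_estimate (h : WeightedData m r0 a w f f1 f2) {s : ℝ} (hs : 1 ≤ s) (hs2 : 2 ≤ s ^ 2) :
    (∫ r in Ioi r0, w r * r ^ 4 * f2 r ^ 2)
      + (1 + s ^ 2) * (∫ r in Ioi r0, w r * r ^ 2 * f1 r ^ 2)
      + (1 + s ^ 2) ^ 2 * (∫ r in Ioi r0, w r * f r ^ 2) ≤
    21 / (1 - 2 * m / r0) ^ 3 * (7 + 30 * (r0 * w r0)) *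
      ((∫ r in Ioi r0, w r * gOp m (s ^ 2) f f1 f2 r ^ 2) + s ^ 3 * f r0 ^ 2) := by
  have hc : 0 < 1 - 2 * m / r0 := by
    rw [sub_pos, div_lt_one h.r0_pos]; exact h.hr0
  have hc1 : 1 - 2 * m / r0 ≤ 1 := by
    have := h.hm; have := h.r0_pos
    rw [sub_le_self_iff]; positivity
  have h1 := h.first_order_estimate hs hs2
  have h2 := h.second_order_estimate (s ^ 2)
  have h3 := h.weight_comparison
  have hw : 0 < r0 * w r0 := mul_pos h.r0_pos (h.wpos r0 self_mem_Ici)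
  have nn : ∀ u : ℝ → ℝ, (∀ r, 0 < w r → 0 ≤ u r) → 0 ≤ ∫ r in Ioi r0, u r := fun u hu =>
    setIntegral_nonneg measurableSet_Ioi fun r hr => hu r (h.wpos r (Ioi_subset_Ici_self hr))
  have hB : 0 ≤ ∫ r in Ioi r0, w r * f r ^ 2 := nn _ fun r hr => by positivity
  have hG : 0 ≤ ∫ r in Ioi r0, w r * gOp m (s ^ 2) f f1 f2 r ^ 2 := nn _ fun r hr => by positivity
  have hJ1 : 0 ≤ ∫ r in Ioi r0, w r * r ^ 2 * f1 r ^ 2 := nn _ fun r hr => by positivity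
  have hE : 0 ≤ s ^ 3 * f r0 ^ 2 := by positivity
  generalize 1 - 2 * m / r0 = c at *
  generalize (∫ r in Ioi r0, w r * (r * (r - 2 * m)) * f1 r ^ 2) = A at *
  generalize (∫ r in Ioi r0, w r * f r ^ 2) = B at *
  generalize (∫ r in Ioi r0, w r * r ^ 2 * f1 r ^ 2) = J1 at *
  generalize (∫ r in Ioi r0, w r * r ^ 4 * f2 r ^ 2) = J2 at *
  generalize (∫ r in Ioi r0, w r * gOp m (s ^ 2) f f1 f2 r ^ 2) = G at *
  generalize s ^ 3 * f r0 ^ 2 = E at *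
  generalize s ^ 2 = K at *
  generalize r0 * w r0 = W at *
  have hA : 0 ≤ A := le_trans (by positivity) h3
  rw [div_mul_eq_mul_div, div_mul_eq_mul_div, le_div_iff₀ (by positivity)]
  have k1 : K * (c * J1) ≤ K * A := mul_le_mul_of_nonneg_left h3 (by linarith)
  have k2 : A ≤ K * A := le_mul_of_one_le_left hA (by linarith)
  have hcc : c ^ 2 ≤ 1 := pow_le_one₀ hc.le hc1
  have hccc : c ^ 3 ≤ 1 := pow_le_one₀ hc.le hc1
  have hX : 0 ≤ K ^ 2 * B := by positivity
  have hKA : 0 ≤ K * A := by linarith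
  -- Each term on the left, multiplied by `c³`, is bounded by multiples of `G`, `K A`, `K² B`.
  have t2 : J2 * c ^ 3 ≤ 3 * G + 3 * (K ^ 2 * B) + 12 * (K * A) := by
    have := mul_le_mul_of_nonneg_left h2 hc.le
    have a1 : c * G ≤ G := mul_le_of_le_one_left hG hc1
    have a2 : c * (K ^ 2 * B) ≤ K ^ 2 * B := mul_le_of_le_one_left hX hc1
    linarith
  have t1 : (1 + K) * J1 * c ^ 3 ≤ 2 * (K * A) := by
    have a1 : (1 + K) * J1 * c ^ 3 = c ^ 2 * ((1 + K) * (c * J1)) := by ring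
    have a2 : (1 + K) * (c * J1) ≤ 2 * (K * A) := by linarith
    have a3 : 0 ≤ (1 + K) * (c * J1) := by
      have : 0 ≤ K := by linarith
      positivity
    rw [a1]
    exact (mul_le_of_le_one_left a3 hcc).trans a2
  have t0 : (1 + K) ^ 2 * B * c ^ 3 ≤ 4 * (K ^ 2 * B) := by
    have a1 : (1 + K) ^ 2 * B ≤ 4 * (K ^ 2 * B) := by
      have : (1 + K) ^ 2 ≤ 4 * K ^ 2 := by nlinarith
      nlinarith
    exact (mul_le_of_le_one_right (by positivity) hccc).trans a1
  nlinarith [mul_nonneg hw.le hG]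

end WeightedData

/-! ### Passing to the norms of the statement -/

lemma wL2_eq_ofReal {r0 μ : ℝ} {u v : ℝ → ℝ}
    (huv : ∀ r ∈ Ioi r0, r ^ (-2*μ-1) * (u r)^2 = v r) (hv : IntegrableOn v (Ioi r0))
    (h0 : ∀ r ∈ Ioi r0, 0 ≤ v r) : wL2 r0 μ u = ENNReal.ofReal (∫ r in Ioi r0, v r) := by
  rw [ofReal_integral_eq_lintegral_ofReal hv
    ((ae_restrict_iff' measurableSet_Ioi).mpr (Filter.Eventually.of_forall h0)), wL2]
  exact setLIntegral_congr_fun measurableSet_Ioi fun r hr => by simp only [huv r hr]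

lemma integrableOn_of_wL2_ne_top {r0 μ : ℝ} {u v : ℝ → ℝ}
    (huv : ∀ r ∈ Ioi r0, r ^ (-2*μ-1) * (u r)^2 = v r) (hv : ContinuousOn v (Ioi r0))
    (h0 : ∀ r ∈ Ioi r0, 0 ≤ v r) (h : wL2 r0 μ u ≠ ⊤) : IntegrableOn v (Ioi r0) := by
  refine ⟨hv.aestronglyMeasurable measurableSet_Ioi, ?_⟩
  rw [hasFiniteIntegral_iff_ofReal
    ((ae_restrict_iff' measurableSet_Ioi).mpr (Filter.Eventually.of_forall h0))]
  refine lt_of_eq_of_lt ?_ h.lt_top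
  exact (setLIntegral_congr_fun measurableSet_Ioi fun r hr => by simp only [huv r hr]).symm

lemma rpow_add_even {r : ℝ} (hr : 0 < r) (a μ : ℝ) (n : ℕ) (h : -2*μ-1 = a + n) :
    r ^ (-2*μ-1) = r ^ a * r ^ n := by
  rw [h, Real.rpow_add_natCast hr.ne']

/-- The power weight `r^(-2δ-1)` together with `f`, `f'`, `f''` fits the abstract setting. -/
lemma MemH2C2.weightedData {m0 r0 δ : ℝ} (hm0 : 0 < m0) (hr0 : 2*m0 < r0)
    (hδ1 : -1 < δ) (hδ2 : δ < -(1/2)) {f : ℝ → ℝ} (hf : MemH2C2 r0 δ f) :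
    WeightedData m0 r0 (-2*δ-1) (fun r => r ^ (-2*δ-1)) f (d1 r0 f) (d2 r0 f) := by
  obtain ⟨hC, h0, h1, h2, -⟩ := hf
  have hp : 0 < r0 := by linarith
  have hpos : ∀ r ∈ Ici r0, 0 < r := fun r hr => hp.trans_le hr
  have hud : UniqueDiffOn ℝ (Ici r0) := uniqueDiffOn_Ici r0
  have hC1 : ContDiffOn ℝ 1 (d1 r0 f) (Ici r0) := by
    have hC' : ContDiffOn ℝ (1 + 1) f (Ici r0) := by
      rw [one_add_one_eq_two]; exact hC
    exact ((contDiffOn_succ_iff_derivWithin hud).mp hC').2.2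
  have hC2 : ContinuousOn (d2 r0 f) (Ici r0) := hC1.continuousOn_derivWithin hud le_rfl
  have hd : ∀ u : ℝ → ℝ, DifferentiableOn ℝ u (Ici r0) → ∀ r ∈ Ioi r0,
      HasDerivAt u (d1 r0 u r) r := fun u hu r hr =>
    (hu r (Ioi_subset_Ici_self hr)).hasDerivWithinAt.hasDerivAt (Ici_mem_nhds hr)
  have hwc : ContinuousOn (fun r : ℝ => r ^ (-2*δ-1)) (Ici r0) :=
    continuousOn_id.rpow_const fun r hr => Or.inl (hpos r hr).ne'
  have hw : ∀ r ∈ Ici r0, 0 < r ^ (-2*δ-1) := fun r hr => Real.rpow_pos_of_pos (hpos r hr) _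
  have hfc := hC.continuousOn
  have hf1c := hC1.continuousOn
  refine ⟨hm0, hr0, by linarith, by linarith, hw, hwc, ?_, hfc, hf1c, hC2,
    hd f (hC.differentiableOn (by norm_num)), hd _ (hC1.differentiableOn (by norm_num)), ?_, ?_, ?_⟩
  · intro r hr
    have hr' := hpos r (Ioi_subset_Ici_self hr)
    refine (Real.hasDerivAt_rpow_const (Or.inl hr'.ne')).congr_deriv ?_
    rw [Real.rpow_sub_one hr'.ne', mul_div_assoc]
  · refine integrableOn_of_wL2_ne_top (fun r hr => rfl)
      (ContinuousOn.mono (by fun_prop) Ioi_subset_Ici_self) ?_ h0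
    intro r hr
    have := hw r (Ioi_subset_Ici_self hr)
    positivity
  · refine integrableOn_of_wL2_ne_top (μ := δ - 1) (u := d1 r0 f) ?_
      (ContinuousOn.mono (by fun_prop) Ioi_subset_Ici_self) ?_ h1
    · intro r hr
      rw [rpow_add_even (hpos r (Ioi_subset_Ici_self hr)) (-2*δ-1) (δ-1) 2 (by push_cast; ring)]
    intro r hr
    have := hw r (Ioi_subset_Ici_self hr)
    positivity
  · refine integrableOn_of_wL2_ne_top (μ := δ - 2) (u := d2 r0 f) ?_
      (ContinuousOn.mono (by fun_prop) Ioi_subset_Ici_self) ?_ h2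
    · intro r hr
      rw [rpow_add_even (hpos r (Ioi_subset_Ici_self hr)) (-2*δ-1) (δ-2) 4 (by push_cast; ring)]
    intro r hr
    have := hw r (Ioi_subset_Ici_self hr)
    positivity

theorem stmt2 (m0 r0 δ : ℝ) (hm0 : 0 < m0) (hr0 : 2*m0 < r0)
    (hδ1 : -1 < δ) (hδ2 : δ < -(1/2)) :
    ∃ C : ℝ, 0 < C ∧ ∀ (l : ℤ), 1 ≤ l → ∀ f : ℝ → ℝ, MemH2C2 r0 δ f →
      wL2 r0 (δ-2) (d2 r0 f)
        + ENNReal.ofReal (1 + (l:ℝ)*((l:ℝ)+1)) * wL2 r0 (δ-1) (d1 r0 f)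
        + (ENNReal.ofReal (1 + (l:ℝ)*((l:ℝ)+1)))^2 * wL2 r0 δ f
      ≤ ENNReal.ofReal C *
        (wL2 r0 (δ-2) (Lop r0 m0 l f)
          + ENNReal.ofReal ((1 + (l:ℝ)*((l:ℝ)+1)) ^ ((3:ℝ)/2))
            * ENNReal.ofReal ((f r0)^2)) := by
  
  have hp : 0 < r0 := by linarith
  have hw0 : 0 < r0 * r0 ^ (-2*δ-1) := mul_pos hp (Real.rpow_pos_of_pos hp _)
  have hc : 0 < 1 - 2 * m0 / r0 := by
    rw [sub_pos, div_lt_one hp]; exact hr0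
  refine ⟨21 / (1 - 2 * m0 / r0) ^ 3 * (7 + 30 * (r0 * r0 ^ (-2*δ-1))), by positivity, ?_⟩
  intro l hl f hf
  have h := hf.weightedData hm0 hr0 hδ1 hδ2
  have hl' : (1 : ℝ) ≤ l := by exact_mod_cast hl
  have hK : 2 ≤ (l : ℝ) * ((l : ℝ) + 1) := by nlinarith
  generalize hKdef : (l : ℝ) * ((l : ℝ) + 1) = K at *
  set s := √K with hs
  have hsK : s ^ 2 = K := Real.sq_sqrt (by linarith)
  have hs1 : 1 ≤ s := Real.one_le_sqrt.mpr (by linarith)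
  have hs3 : s ^ 3 ≤ (1 + K) ^ ((3:ℝ)/2) := by
    have : s ^ 3 = K ^ ((3:ℝ)/2) := by
      rw [hs, Real.sqrt_eq_rpow, ← Real.rpow_natCast, ← Real.rpow_mul (by linarith)]
      norm_num
    rw [this]
    exact Real.rpow_le_rpow (by linarith) (by linarith) (by norm_num)
  have hmain := h.main_estimate hs1 (by rw [hsK]; exact hK)
  rw [hsK] at hmain
  have hpos : ∀ r ∈ Ioi r0, 0 < r := fun r hr => hp.trans hr
  have hw : ∀ r ∈ Ioi r0, 0 < r ^ (-2*δ-1) := fun r hr => Real.rpow_pos_of_pos (hpos r hr) _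
  have E0 := wL2_eq_ofReal (μ := δ) (u := f) (fun r _ => rfl) h.i0 fun r hr => by
    have := hw r hr; positivity
  have E1 := wL2_eq_ofReal (μ := δ - 1) (u := d1 r0 f) (fun r hr => by
    rw [rpow_add_even (hpos r hr) (-2*δ-1) (δ-1) 2 (by push_cast; ring)]) h.i1 fun r hr => by
      have := hw r hr; positivity
  have E2 := wL2_eq_ofReal (μ := δ - 2) (u := d2 r0 f) (fun r hr => by
    rw [rpow_add_even (hpos r hr) (-2*δ-1) (δ-2) 4 (by push_cast; ring)]) h.i2 fun r hr => by
      have := hw r hr; positivity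
  have EG : ENNReal.ofReal (∫ r in Ioi r0, r ^ (-2*δ-1) * gOp m0 K f (d1 r0 f) (d2 r0 f) r ^ 2)
      ≤ wL2 r0 (δ-2) (Lop r0 m0 l f) := by
    rw [ofReal_integral_eq_lintegral_ofReal (h.integrableOn_g K)
      ((ae_restrict_iff' measurableSet_Ioi).mpr (Filter.Eventually.of_forall fun r hr => by
        have := hw r hr
        simp only [Pi.zero_apply]
        positivity)), wL2]
    refine setLIntegral_mono' measurableSet_Ioi fun r hr => ENNReal.ofReal_le_ofReal ?_
    have hr' := hpos r hr
    have hrr : r0 < r := hr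
    have hP : 0 < r - 2 * m0 := by linarith
    have hg : gOp m0 K f (d1 r0 f) (d2 r0 f) r = r * (r - 2 * m0) * Lop r0 m0 l f r := by
      unfold gOp Lop
      rw [hKdef]
      field_simp
    rw [rpow_add_even hr' (-2*δ-1) (δ-2) 4 (by push_cast; ring), hg, mul_pow, mul_assoc]
    have := hw r hr
    have hP2 : (r * (r - 2 * m0)) ^ 2 ≤ r ^ 4 := by
      rw [show r ^ 4 = (r * r) ^ 2 by ring]
      gcongr
      linarith
    gcongr
  have hB := integral_nonneg_of_ae (f := fun r => r ^ (-2*δ-1) * f r ^ 2)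
    ((ae_restrict_iff' (μ := volume) (measurableSet_Ioi (a := r0))).mpr
      (Filter.Eventually.of_forall fun r hr => by
        have := hw r hr
        simp only [Pi.zero_apply]
        positivity))
  have hJ1 := integral_nonneg_of_ae (f := fun r => r ^ (-2*δ-1) * r ^ 2 * d1 r0 f r ^ 2)
    ((ae_restrict_iff' (μ := volume) (measurableSet_Ioi (a := r0))).mpr
      (Filter.Eventually.of_forall fun r hr => by
        have := hw r hr
        simp only [Pi.zero_apply]
        positivity))
  have hJ2 := integral_nonneg_of_ae (f := fun r => r ^ (-2*δ-1) * r ^ 4 * d2 r0 f r ^ 2)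
    ((ae_restrict_iff' (μ := volume) (measurableSet_Ioi (a := r0))).mpr
      (Filter.Eventually.of_forall fun r hr => by
        have := hw r hr
        simp only [Pi.zero_apply]
        positivity))
  have hG := integral_nonneg_of_ae
    (f := fun r => r ^ (-2*δ-1) * gOp m0 K f (d1 r0 f) (d2 r0 f) r ^ 2)
    ((ae_restrict_iff' (μ := volume) (measurableSet_Ioi (a := r0))).mpr
      (Filter.Eventually.of_forall fun r hr => by
        have := hw r hr
        simp only [Pi.zero_apply]
        positivity))
  rw [E0, E1, E2, ← ENNReal.ofReal_pow (by linarith), ← ENNReal.ofReal_mul (by linarith),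
    ← ENNReal.ofReal_mul (by positivity), ← ENNReal.ofReal_add hJ2 (mul_nonneg (by linarith) hJ1),
    ← ENNReal.ofReal_add (add_nonneg hJ2 (mul_nonneg (by linarith) hJ1))
      (mul_nonneg (by positivity) hB)]
  refine (ENNReal.ofReal_le_ofReal hmain).trans ?_
  rw [ENNReal.ofReal_mul (by positivity),
    ENNReal.ofReal_add hG (mul_nonneg (by positivity) (sq_nonneg _)),
    ENNReal.ofReal_mul (p := s ^ 3) (by positivity)]
  gcongr
end

section
/- There exists a constant C > 0 depending only on r0, m0 and δ such that for every integer ℓ ≥ 1 and every function f belonging to H²_δ ∩ C²_δ one has ‖f''‖²_{C⁰_{δ-2}} + (1+ℓ(ℓ+1))·‖f'‖²_{C⁰_{δ-1}} + (1+ℓ(ℓ+1))²·‖f‖²_{C⁰_δ} ≤ C·( ‖L_ℓ f‖²_{C⁰_{δ-2}} + (1+ℓ(ℓ+1))²·f(r0)² ). -/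
/-!
Write `p = r (r - 2 m0)`, `λ = ℓ(ℓ+1)` and `F = (p f')'`, so that `p · L_ℓ f = F - λ f`. If
`|L_ℓ f| ≤ G r^(δ-2)`, then `|F - λ f| ≤ G r^δ`.

*Bound on `f`.* For `-1 < δ < 0` the function `r^δ` is a supersolution, uniformly in `ℓ`:
`(p (r^δ)')' - λ r^δ = (δ(δ+1) - λ - 2 m0 δ²/r) r^δ ≤ -λ r^δ`. Since `f = O(r^δ)` tends to zero
at infinity, the maximum principle applied to `(M/λ) r^δ ± f` with
`M = 2 G + λ |f(r0)| r0^(-δ)` gives `|f| ≤ (M/λ) r^δ`, and then `|F| ≤ M r^δ`.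

*Bound on `f'`.* This is an interpolation at the scale `h = r/√λ ≤ r`: the mean value theorem on
`[r, r+h]` gives a point where `|f'| ≤ 2 (M/√λ) r^(δ-1)`, and `|(p f')'| ≤ M r^δ` carries this
bound back to `r`, at the cost of the factor `1/(1 - 2 m0/r0)` from dividing by `p`.

*Bound on `f''`.* It is read off from `p f'' = F - 2 (r - m0) f'`.

The powers of `λ` gained in the three bounds are those of the weights in the estimate. The
`L²` part of the hypothesis plays no role: the decay coming from `C⁰_δ` suffices.
-/


open Set MeasureTheory
open scoped ENNReal

/-- Maximum principle on a half-line, at the level of first and second derivatives: a function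
which is nonnegative at `r0`, tends to zero at infinity, and satisfies `g'' < 0` at every critical
point where it is negative, is nonnegative. -/
lemma nonneg_of_supersolution {r0 : ℝ} {g g1 g2 : ℝ → ℝ}
    (hc : ContinuousOn g (Ici r0))
    (h1 : ∀ r, r0 < r → HasDerivAt g (g1 r) r)
    (h2 : ∀ r, r0 < r → HasDerivAt g1 (g2 r) r)
    (hs : ∀ r, r0 < r → g1 r = 0 → g r < 0 → g2 r < 0)
    (h0 : 0 ≤ g r0) (hlim : Filter.Tendsto g Filter.atTop (nhds 0)) :
    ∀ r, r0 ≤ r → 0 ≤ g r := by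
  intro x hx
  by_contra! hneg
  have hev : ∀ᶠ z in Filter.cocompact ℝ ⊓ Filter.principal (Ici r0), g x ≤ g z := by
    have e1 : ∀ᶠ z in Filter.atTop, g x ≤ g z := (hlim.eventually (lt_mem_nhds hneg)).mono
      fun z hz => hz.le
    rw [Filter.eventually_inf_principal, cocompact_eq_atBot_atTop, Filter.eventually_sup]
    refine ⟨?_, e1.mono fun z hz _ => hz⟩
    filter_upwards [Filter.eventually_lt_atBot r0] with z hz hz'
    exact absurd hz (not_lt.mpr hz')
  obtain ⟨y, hy, hmin⟩ := hc.exists_isMinOn' isClosed_Ici hx hev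
  have hgy : g y < 0 := lt_of_le_of_lt (hmin hx) hneg
  have hyr : r0 < y := by
    rcases eq_or_lt_of_le (show r0 ≤ y from hy) with h | h
    · rw [← h] at hgy; linarith
    · exact h
  have hlm : IsLocalMin g y := hmin.isLocalMin (Ici_mem_nhds hyr)
  have hg1 : g1 y = 0 := hlm.hasDerivAt_eq_zero (h1 y hyr)
  have hg2 := hs y hyr hg1 hgy
  have hd : deriv g =ᶠ[nhds y] g1 := by
    filter_upwards [Ioi_mem_nhds hyr] with z hz using (h1 z hz).deriv
  have hdd : deriv (deriv g) y = g2 y := by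
    rw [hd.deriv_eq]; exact (h2 y hyr).deriv
  have hmax : IsLocalMax g y := isLocalMax_of_deriv_deriv_neg (by rw [hdd]; exact hg2)
    (by rw [(h1 y hyr).deriv, hg1]) (h1 y hyr).continuousAt
  -- A local minimum that is also a local maximum: `g` is locally constant, so `g'' = 0` there.
  have hconst : g =ᶠ[nhds y] fun _ => g y := by
    filter_upwards [hlm, hmax] with z hz hz' using le_antisymm hz' hz
  have h3 : deriv (deriv g) y = 0 := by
    rw [hconst.deriv.deriv_eq]; simp
  linarith

/-- The barrier estimate: `r^δ` dominates `± f` by the maximum principle. The sign `ε = ±1`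
is not fixed, so that both bounds come from the same statement. -/
lemma barrier {m0 r0 δ lam G A K ε : ℝ} {f f1 f2 : ℝ → ℝ}
    (hm0 : 0 < m0) (hr0 : 2 * m0 < r0) (hδ1 : -1 < δ) (hδ2 : δ < 0) (hlam : 0 < lam)
    (hε : |ε| = 1)
    (hc : ContinuousOn f (Ici r0))
    (h1 : ∀ r, r0 < r → HasDerivAt f (f1 r) r)
    (h2 : ∀ r, r0 < r → HasDerivAt f1 (f2 r) r)
    (hA : ∀ r, r0 ≤ r → |f r| ≤ A * r ^ δ)
    (hG : ∀ r, r0 ≤ r → |r * (r - 2 * m0) * f2 r + 2 * (r - m0) * f1 r - lam * f r| ≤ G * r ^ δ)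
    (hK0 : |f r0| ≤ K * r0 ^ δ) (hK : G ≤ lam * K) :
    ∀ r, r0 ≤ r → 0 ≤ K * r ^ δ + ε * f r := by
  have hr0p : 0 < r0 := by linarith
  have hK1 : 0 ≤ K := by
    have := Real.rpow_pos_of_pos hr0p δ
    by_contra! h
    nlinarith [abs_nonneg (f r0)]
  refine nonneg_of_supersolution
    (g1 := fun r => K * (δ * r ^ (δ - 1)) + ε * f1 r)
    (g2 := fun r => K * (δ * ((δ - 1) * r ^ (δ - 1 - 1))) + ε * f2 r) ?_ ?_ ?_ ?_ ?_ ?_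
  · refine (continuousOn_const.mul (ContinuousOn.rpow_const continuousOn_id ?_)).add
      (continuousOn_const.mul hc)
    intro x hx
    have : r0 ≤ x := hx
    left; simp only [id]; linarith
  · intro r hr
    have := Real.hasDerivAt_rpow_const (x := r) (p := δ) (Or.inl (by linarith))
    exact (this.const_mul K).add ((h1 r hr).const_mul ε)
  · intro r hr
    have := Real.hasDerivAt_rpow_const (x := r) (p := δ - 1) (Or.inl (by linarith))
    exact ((this.const_mul δ).const_mul K).add ((h2 r hr).const_mul ε)
  · intro r hr hcrit hneg
    have hrp : 0 < r := by linarith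
    have e1 : r ^ (δ - 1) = r ^ δ / r := Real.rpow_sub_one hrp.ne' δ
    have e2 : r ^ (δ - 1 - 1) = r ^ δ / r / r := by rw [Real.rpow_sub_one hrp.ne', e1]
    simp only [e1, e2] at hcrit ⊢
    have hP := Real.rpow_pos_of_pos hrp δ
    set P := r ^ δ
    have hp : 0 < r * (r - 2 * m0) := mul_pos hrp (by linarith)
    have hg := hG r hr.le
    set Q := r * (r - 2 * m0) * f2 r + 2 * (r - m0) * f1 r - lam * f r with hQ
    have hεQ : ε * Q ≤ G * P := by
      calc ε * Q ≤ |ε * Q| := le_abs_self _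
        _ = |Q| := by rw [abs_mul, hε, one_mul]
        _ ≤ _ := hg
    have key : r * (r - 2 * m0) * (K * (δ * ((δ - 1) * (P / r / r))) + ε * f2 r)
        = K * P * (δ * (δ + 1) - lam - 2 * m0 * δ ^ 2 / r) + ε * Q
          + lam * (K * P + ε * f r)
          - 2 * (r - m0) * (K * (δ * (P / r)) + ε * f1 r) := by
      rw [hQ]; field_simp; ring
    have hKP : 0 ≤ K * P := mul_nonneg hK1 hP.le
    have b1 : K * P * (δ * (δ + 1) - lam - 2 * m0 * δ ^ 2 / r) ≤ K * P * (-lam) := by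
      apply mul_le_mul_of_nonneg_left _ hKP
      have : 0 ≤ 2 * m0 * δ ^ 2 / r := by positivity
      nlinarith
    have b2 : G * P ≤ lam * K * P := mul_le_mul_of_nonneg_right hK hP.le
    have b3 : lam * (K * P + ε * f r) < 0 := mul_neg_of_pos_of_neg hlam hneg
    rw [hcrit] at key
    have : r * (r - 2 * m0) * (K * (δ * ((δ - 1) * (P / r / r))) + ε * f2 r) < 0 := by
      rw [key]; linarith
    by_contra! h
    exact absurd (mul_nonneg hp.le h) (not_le.mpr this)
  · have := neg_abs_le (ε * f r0)
    rw [abs_mul, hε, one_mul] at this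
    linarith
  · have t0 : Filter.Tendsto (fun r : ℝ => r ^ δ) Filter.atTop (nhds 0) := by
      simpa using tendsto_rpow_neg_atTop (y := -δ) (by linarith)
    have tf : Filter.Tendsto f Filter.atTop (nhds 0) := by
      refine squeeze_zero_norm' (a := fun r => A * r ^ δ) ?_ (by simpa using t0.const_mul A)
      filter_upwards [Filter.eventually_ge_atTop r0] with r hr using hA r hr
    simpa using (t0.const_mul K).add (tf.const_mul ε)

/-- Interpolation at the scale `h = r / s`, where `s = √λ`: a bound on `f` which gains `s ^ 2`
and a bound on `(p f')'` give a bound on `r f'` which gains `s`. The constant `9 = 2 · 4 + 1`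
comes from the mean value theorem, from `p ≤ (2 r)²` on `[r, r + h]`, and from integrating
`(p f')'`. -/
lemma deriv_bound_s3 {m0 r0 δ s M c : ℝ} {f f1 f2 : ℝ → ℝ}
    (hm0 : 0 < m0) (hδ2 : δ < 0) (hs : 1 ≤ s) (hr0 : 0 < r0)
    (hM : 0 ≤ M) (hc : 0 < c) (hp : ∀ r, r0 ≤ r → c * r ^ 2 ≤ r * (r - 2 * m0))
    (hcf : ContinuousOn f (Ici r0)) (hcf1 : ContinuousOn f1 (Ici r0))
    (h1 : ∀ r, r0 < r → HasDerivAt f (f1 r) r)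
    (h2 : ∀ r, r0 < r → HasDerivAt f1 (f2 r) r)
    (hf : ∀ r, r0 ≤ r → s ^ 2 * |f r| ≤ M * r ^ δ)
    (hF : ∀ r, r0 ≤ r → |r * (r - 2 * m0) * f2 r + 2 * (r - m0) * f1 r| ≤ M * r ^ δ) :
    ∀ r, r0 ≤ r → c * s * (r * |f1 r|) ≤ 9 * M * r ^ δ := by
  intro r hr
  have hrp : 0 < r := by linarith
  have hsp : 0 < s := by linarith
  have hP := Real.rpow_pos_of_pos hrp δ
  have mono : ∀ t, r ≤ t → t ^ δ ≤ r ^ δ := fun t ht =>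
    Real.rpow_le_rpow_of_nonpos hrp ht hδ2.le
  set P := r ^ δ with hPdef
  set h := r / s with hh
  have hhp : 0 < h := div_pos hrp hsp
  have hhr : h ≤ r := div_le_self hrp.le hs
  have hsh : s * h = r := by rw [hh]; field_simp
  have hsub : Icc r (r + h) ⊆ Ici r0 := fun x hx => hr.trans hx.1
  obtain ⟨t, ht, hte⟩ := exists_hasDerivAt_eq_slope f f1 (by linarith : r < r + h)
    (hcf.mono hsub) (fun x hx => h1 x (lt_of_le_of_lt hr hx.1))
  have ht1 := ht.1
  have ht2 := ht.2
  have hf1t : s * (r * |f1 t|) ≤ 2 * M * P := by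
    have a1 := hf r hr
    have a2 := (hf (r + h) (by linarith)).trans
      (mul_le_mul_of_nonneg_left (mono (r + h) (by linarith)) hM)
    have a3 : h * |f1 t| = |f (r + h) - f r| := by
      rw [hte, add_sub_cancel_left, abs_div, abs_of_pos hhp]; field_simp
    have a4 : |f (r + h) - f r| ≤ |f (r + h)| + |f r| := abs_sub _ _
    calc s * (r * |f1 t|) = s ^ 2 * (h * |f1 t|) := by rw [← hsh]; ring
      _ ≤ s ^ 2 * (|f (r + h)| + |f r|) := by rw [a3]; gcongr
      _ ≤ _ := by linarith
  have hq : |t * (t - 2 * m0) * f1 t - r * (r - 2 * m0) * f1 r| ≤ M * P * (t - r) := by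
    have hd : ∀ x, r < x → HasDerivAt (fun x => x * (x - 2 * m0) * f1 x)
        (x * (x - 2 * m0) * f2 x + 2 * (x - m0) * f1 x) x := by
      intro x hx
      have := (((hasDerivAt_id x).mul ((hasDerivAt_id x).sub_const (2 * m0))).mul
        (h2 x (by linarith)))
      refine this.congr_deriv ?_
      simp only [id, Pi.mul_apply]; ring
    obtain ⟨u, hu, hue⟩ := exists_hasDerivAt_eq_slope (fun x => x * (x - 2 * m0) * f1 x)
      (fun x => x * (x - 2 * m0) * f2 x + 2 * (x - m0) * f1 x) ht1
      ((Continuous.continuousOn (by fun_prop)).mul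
        (hcf1.mono fun x hx => hr.trans hx.1))
      (fun x hx => hd x hx.1)
    have b1 := (hF u (by linarith [hu.1])).trans
      (mul_le_mul_of_nonneg_left (mono u hu.1.le) hM)
    rw [hue, abs_div, abs_of_pos (by linarith : 0 < t - r), div_le_iff₀ (by linarith)] at b1
    exact b1
  have hpt : |t * (t - 2 * m0) * f1 t| ≤ 4 * r ^ 2 * |f1 t| := by
    have q0 : 0 ≤ t * (t - 2 * m0) := le_trans (by positivity) (hp t (by linarith))
    rw [abs_mul, abs_of_nonneg q0]
    apply mul_le_mul_of_nonneg_right _ (abs_nonneg _)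
    nlinarith
  have hpr : c * r ^ 2 * |f1 r| ≤ |r * (r - 2 * m0) * f1 r| := by
    have q0 : 0 ≤ r * (r - 2 * m0) := le_trans (by positivity) (hp r hr)
    rw [abs_mul, abs_of_nonneg q0]
    exact mul_le_mul_of_nonneg_right (hp r hr) (abs_nonneg _)
  have htri : |r * (r - 2 * m0) * f1 r| ≤ |t * (t - 2 * m0) * f1 t|
      + |t * (t - 2 * m0) * f1 t - r * (r - 2 * m0) * f1 r| := by
    have := abs_sub (t * (t - 2 * m0) * f1 t)
      (t * (t - 2 * m0) * f1 t - r * (r - 2 * m0) * f1 r)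
    rwa [sub_sub_cancel] at this
  have htr : M * P * (t - r) ≤ M * P * h :=
    mul_le_mul_of_nonneg_left (by linarith) (by positivity)
  have fin1 : c * r ^ 2 * |f1 r| ≤ 4 * r ^ 2 * |f1 t| + M * P * h := by linarith
  have fin2 : r * (c * s * (r * |f1 r|)) ≤ r * (9 * M * P) := by
    calc r * (c * s * (r * |f1 r|)) = s * (c * r ^ 2 * |f1 r|) := by ring
      _ ≤ s * (4 * r ^ 2 * |f1 t| + M * P * h) := by gcongr
      _ = 4 * r * (s * (r * |f1 t|)) + M * P * (s * h) := by ring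
      _ ≤ 4 * r * (2 * M * P) + M * P * r := by rw [hsh]; gcongr
      _ = _ := by ring
  exact le_of_mul_le_mul_left fin2 hrp

lemma wC0_le {r0 μ K : ℝ} {f : ℝ → ℝ} (hr0 : 0 < r0)
    (h : ∀ r, r0 ≤ r → |f r| ≤ K * r ^ μ) : wC0 r0 μ f ≤ ENNReal.ofReal (K ^ 2) := by
  refine iSup₂_le fun r hr => ENNReal.ofReal_le_ofReal ?_
  have hrp : 0 < r := lt_of_lt_of_le hr0 hr
  have hP := Real.rpow_pos_of_pos hrp μ
  have e : r ^ (-2 * μ) = ((r ^ μ) ^ 2)⁻¹ := by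
    rw [← Real.rpow_natCast, ← Real.rpow_mul hrp.le, ← Real.rpow_neg hrp.le]
    congr 1; push_cast; ring
  have h2 : (f r) ^ 2 ≤ (K * r ^ μ) ^ 2 := by
    rw [← sq_abs]; exact pow_le_pow_left₀ (abs_nonneg _) (h r hr) 2
  rw [e, inv_mul_le_iff₀ (by positivity)]
  linarith [mul_pow K (r ^ μ) 2]

lemma le_of_wC0 {r0 μ : ℝ} {f : ℝ → ℝ} (hr0 : 0 < r0) (hf : wC0 r0 μ f ≠ ⊤) :
    ∀ r, r0 ≤ r → |f r| ≤ √(wC0 r0 μ f).toReal * r ^ μ := by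
  intro r hr
  have hrp : 0 < r := lt_of_lt_of_le hr0 hr
  have hP := Real.rpow_pos_of_pos hrp μ
  have e : r ^ (-2 * μ) = ((r ^ μ) ^ 2)⁻¹ := by
    rw [← Real.rpow_natCast, ← Real.rpow_mul hrp.le, ← Real.rpow_neg hrp.le]
    congr 1; push_cast; ring
  have h1 : ENNReal.ofReal (r ^ (-2 * μ) * (f r) ^ 2) ≤ wC0 r0 μ f :=
    le_iSup₂ (f := fun r (_ : r ∈ Ici r0) => ENNReal.ofReal (r ^ (-2 * μ) * (f r) ^ 2)) r hr
  have h2 := (ENNReal.ofReal_le_iff_le_toReal hf).1 h1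
  rw [e, inv_mul_le_iff₀ (by positivity)] at h2
  refine abs_le_of_sq_le_sq ?_ (by positivity)
  rw [mul_pow, Real.sq_sqrt ENNReal.toReal_nonneg]
  linarith

/-- The three pointwise bounds, with `M = 2 G + λ |f(r0)| r0^(-δ)` and `s = √λ`. -/
lemma pointwise_bounds {m0 r0 δ s G A c M : ℝ} {f f1 f2 : ℝ → ℝ}
    (hm0 : 0 < m0) (hr0 : 2 * m0 < r0) (hδ1 : -1 < δ) (hδ2 : δ < 0) (hs : 1 ≤ s) (hG0 : 0 ≤ G)
    (hcdef : c = 1 - 2 * m0 / r0) (hMdef : M = 2 * G + s ^ 2 * |f r0| * r0 ^ (-δ))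
    (hcf : ContinuousOn f (Ici r0)) (hcf1 : ContinuousOn f1 (Ici r0))
    (h1 : ∀ r, r0 < r → HasDerivAt f (f1 r) r)
    (h2 : ∀ r, r0 < r → HasDerivAt f1 (f2 r) r)
    (hA : ∀ r, r0 ≤ r → |f r| ≤ A * r ^ δ)
    (hG : ∀ r, r0 ≤ r → |r * (r - 2 * m0) * f2 r + 2 * (r - m0) * f1 r - s ^ 2 * f r|
      ≤ G * r ^ δ) :
    (∀ r, r0 ≤ r → |f r| ≤ M / s ^ 2 * r ^ δ) ∧
    (∀ r, r0 ≤ r → |f1 r| ≤ 9 * M / (c * s) * r ^ (δ - 1)) ∧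
    (∀ r, r0 ≤ r → |f2 r| ≤ 19 * M / c ^ 2 * r ^ (δ - 2)) := by
  have hr0p : 0 < r0 := by linarith
  have hsp : 0 < s := by linarith
  have hc : 0 < c := by
    rw [hcdef, sub_pos, div_lt_one hr0p]; exact hr0
  have hc1 : c ≤ 1 := by
    rw [hcdef]; have : 0 < 2 * m0 / r0 := by positivity
    linarith
  have hp : ∀ r, r0 ≤ r → c * r ^ 2 ≤ r * (r - 2 * m0) := by
    intro r hr
    have hrp : 0 < r := by linarith
    have : 2 * m0 ≤ 2 * m0 / r0 * r := by
      rw [div_mul_eq_mul_div, le_div_iff₀ hr0p]; gcongr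
    rw [hcdef]; nlinarith
  have hM : 0 ≤ M := by rw [hMdef]; positivity
  set K := (G + s ^ 2 * |f r0| * r0 ^ (-δ)) / s ^ 2 with hKdef
  have hsK : s ^ 2 * K = G + s ^ 2 * |f r0| * r0 ^ (-δ) := by rw [hKdef]; field_simp
  have hK0 : |f r0| ≤ K * r0 ^ δ := by
    have e : r0 ^ (-δ) * r0 ^ δ = 1 := by rw [← Real.rpow_add hr0p]; simp
    have hP := Real.rpow_pos_of_pos hr0p δ
    have : s ^ 2 * |f r0| ≤ s ^ 2 * (K * r0 ^ δ) := by
      rw [← mul_assoc, hsK, add_mul, mul_assoc (s ^ 2 * |f r0|), e, mul_one]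
      nlinarith
    exact le_of_mul_le_mul_left this (by positivity)
  have hGK : G ≤ s ^ 2 * K := by
    rw [hsK]; have : 0 ≤ s ^ 2 * |f r0| * r0 ^ (-δ) := by positivity
    linarith
  have fK : ∀ r, r0 ≤ r → |f r| ≤ K * r ^ δ := by
    intro r hr
    have b1 := barrier (ε := 1) hm0 hr0 hδ1 hδ2 (by positivity) (by simp) hcf h1 h2 hA hG hK0
      hGK r hr
    have b2 := barrier (ε := -1) hm0 hr0 hδ1 hδ2 (by positivity) (by simp) hcf h1 h2 hA hG hK0
      hGK r hr
    rw [abs_le]; constructor <;> linarith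
  have fM : ∀ r, r0 ≤ r → s ^ 2 * |f r| ≤ (M - G) * r ^ δ := by
    intro r hr
    have : M - G = s ^ 2 * K := by rw [hsK, hMdef]; ring
    rw [this, mul_assoc]
    exact mul_le_mul_of_nonneg_left (fK r hr) (by positivity)
  have fM' : ∀ r, r0 ≤ r → s ^ 2 * |f r| ≤ M * r ^ δ := by
    intro r hr
    have hP := Real.rpow_pos_of_pos (by linarith : 0 < r) δ
    nlinarith [fM r hr]
  have hF : ∀ r, r0 ≤ r → |r * (r - 2 * m0) * f2 r + 2 * (r - m0) * f1 r| ≤ M * r ^ δ := by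
    intro r hr
    have a1 := hG r hr
    have a2 := fM r hr
    have a3 := abs_add_le (r * (r - 2 * m0) * f2 r + 2 * (r - m0) * f1 r - s ^ 2 * f r)
      (s ^ 2 * f r)
    rw [sub_add_cancel, abs_mul (s ^ 2), abs_of_pos (by positivity : 0 < s ^ 2)] at a3
    linarith
  have hf1 := deriv_bound_s3 hm0 hδ2 hs hr0p hM hc hp hcf hcf1 h1 h2 fM' hF
  refine ⟨fun r hr => ?_, fun r hr => ?_, fun r hr => ?_⟩
  · rw [div_mul_eq_mul_div, le_div_iff₀ (by positivity), mul_comm]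
    exact fM' r hr
  · have hrp : 0 < r := by linarith
    rw [Real.rpow_sub_one hrp.ne', div_mul_div_comm, le_div_iff₀ (by positivity)]
    linarith [hf1 r hr]
  · have hrp : 0 < r := by linarith
    have e : r ^ (δ - 2) = r ^ δ / r ^ 2 := by
      rw [Real.rpow_sub hrp]; norm_num
    have hP := Real.rpow_pos_of_pos hrp δ
    rw [e, div_mul_div_comm, le_div_iff₀ (by positivity)]
    have a1 := hF r hr
    have a2 := hf1 r hr
    have q0 : 0 ≤ r * (r - 2 * m0) := le_trans (by positivity) (hp r hr)
    have a3 : r * (r - 2 * m0) * |f2 r| ≤ M * r ^ δ + 2 * r * |f1 r| := by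
      have b := abs_sub (r * (r - 2 * m0) * f2 r + 2 * (r - m0) * f1 r) (2 * (r - m0) * f1 r)
      rw [add_sub_cancel_right, abs_mul, abs_of_nonneg q0, abs_mul (2 * (r - m0)),
        abs_of_pos (by linarith : 0 < 2 * (r - m0))] at b
      have : 2 * (r - m0) * |f1 r| ≤ 2 * r * |f1 r| := by gcongr; linarith
      linarith
    have a4 : c * r ^ 2 * |f2 r| ≤ M * r ^ δ + 2 * r * |f1 r| :=
      (mul_le_mul_of_nonneg_right (hp r hr) (abs_nonneg _)).trans a3
    have a5 : c * (r * |f1 r|) ≤ 9 * M * r ^ δ := by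
      have : 0 ≤ c * (r * |f1 r|) := by positivity
      nlinarith
    have a6 : c * (c * r ^ 2 * |f2 r|) ≤ c * (M * r ^ δ + 2 * r * |f1 r|) := by gcongr
    have a7 : 0 ≤ M * r ^ δ := by positivity
    nlinarith

theorem stmt3 (m0 r0 δ : ℝ) (hm0 : 0 < m0) (hr0 : 2*m0 < r0)
    (hδ1 : -1 < δ) (hδ2 : δ < -(1/2)) :
    ∃ C : ℝ, 0 < C ∧ ∀ (l : ℤ), 1 ≤ l → ∀ f : ℝ → ℝ, MemH2C2 r0 δ f →
      wC0 r0 (δ-2) (d2 r0 f)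
        + ENNReal.ofReal (1 + (l:ℝ)*((l:ℝ)+1)) * wC0 r0 (δ-1) (d1 r0 f)
        + (ENNReal.ofReal (1 + (l:ℝ)*((l:ℝ)+1)))^2 * wC0 r0 δ f
      ≤ ENNReal.ofReal C *
        (wC0 r0 (δ-2) (Lop r0 m0 l f)
          + (ENNReal.ofReal (1 + (l:ℝ)*((l:ℝ)+1)))^2
            * ENNReal.ofReal ((f r0)^2)) := by
  have hr0p : 0 < r0 := by linarith
  have hδ0 : δ < 0 := by linarith
  set c := 1 - 2 * m0 / r0 with hcdef
  have hc : 0 < c := by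
    rw [hcdef, sub_pos, div_lt_one hr0p]; exact hr0
  have hc1 : c ≤ 1 := by
    rw [hcdef]; have : 0 < 2 * m0 / r0 := by positivity
    linarith
  set B := r0 ^ (-δ) with hBdef
  have hB : 0 < B := Real.rpow_pos_of_pos hr0p _
  -- `4216 = 8 · 527`: the squared pointwise bounds contribute `361 + 162 + 4 = 527` times
  -- `M² / c⁴`, and `M² ≤ 8 (1 + B²) (G² + (1 + λ)² f(r0)²)`.
  refine ⟨4216 * (1 + B ^ 2) / c ^ 4, by positivity, ?_⟩
  intro l hl f hf
  obtain ⟨hcd, -, -, -, hfC, -, -⟩ := hf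
  have hl' : (1 : ℝ) ≤ l := by exact_mod_cast hl
  set lam : ℝ := (l : ℝ) * ((l : ℝ) + 1) with hlam
  have hlam1 : 1 ≤ lam := by nlinarith
  by_cases hS : wC0 r0 (δ - 2) (Lop r0 m0 l f) = ⊤
  · rw [hS, top_add, ENNReal.mul_top]
    · exact le_top
    · rw [Ne, ENNReal.ofReal_eq_zero, not_le]; positivity
  have hL := le_of_wC0 hr0p hS
  have hA := le_of_wC0 hr0p hfC
  set S := wC0 r0 (δ - 2) (Lop r0 m0 l f) with hSdef
  set G := √S.toReal with hGdef
  have hG0 : 0 ≤ G := Real.sqrt_nonneg _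
  have hSG : S = ENNReal.ofReal (G ^ 2) := by
    rw [hGdef, Real.sq_sqrt ENNReal.toReal_nonneg, ENNReal.ofReal_toReal hS]
  set s := √lam with hsdef
  have hs : 1 ≤ s := Real.one_le_sqrt.2 hlam1
  have hs2 : s ^ 2 = lam := Real.sq_sqrt (by linarith)
  have hcd1 : ContDiffOn ℝ 1 (d1 r0 f) (Ici r0) := hcd.derivWithin (uniqueDiffOn_Ici r0) le_rfl
  have hD1 : ∀ r, r0 < r → HasDerivAt f (d1 r0 f r) r := fun r hr =>
    ((hcd.differentiableOn (by norm_num) r hr.le).hasDerivWithinAt).hasDerivAt (Ici_mem_nhds hr)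
  have hD2 : ∀ r, r0 < r → HasDerivAt (d1 r0 f) (d2 r0 f r) r := fun r hr =>
    ((hcd1.differentiableOn (by norm_num) r hr.le).hasDerivWithinAt).hasDerivAt (Ici_mem_nhds hr)
  have hG : ∀ r, r0 ≤ r → |r * (r - 2 * m0) * d2 r0 f r + 2 * (r - m0) * d1 r0 f r
      - s ^ 2 * f r| ≤ G * r ^ δ := by
    intro r hr
    have hrp : 0 < r := by linarith
    have hrm : 0 < r - 2 * m0 := by linarith
    have e : r ^ (δ - 2) = r ^ δ / r ^ 2 := by
      rw [Real.rpow_sub hrp]; norm_num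
    have hP := Real.rpow_pos_of_pos hrp δ
    have e2 : r * (r - 2 * m0) * d2 r0 f r + 2 * (r - m0) * d1 r0 f r - s ^ 2 * f r
        = r * (r - 2 * m0) * Lop r0 m0 l f r := by
      rw [hs2]; unfold Lop; rw [← hlam]; field_simp
    rw [e2, abs_mul, abs_of_pos (by positivity)]
    calc r * (r - 2 * m0) * |Lop r0 m0 l f r| ≤ r ^ 2 * (G * r ^ (δ - 2)) := by
          gcongr
          · nlinarith
          · exact hL r hr
      _ = G * r ^ δ := by rw [e]; field_simp
  obtain ⟨b0, b1, b2⟩ := pointwise_bounds hm0 hr0 hδ1 hδ0 hs hG0 hcdef rfl hcd.continuousOn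
    hcd1.continuousOn hD1 hD2 hA hG
  rw [← hBdef] at b0 b1 b2
  set M := 2 * G + s ^ 2 * |f r0| * B with hM
  have w0 := wC0_le hr0p b0
  have w1 := wC0_le hr0p b1
  have w2 := wC0_le hr0p b2
  refine (add_le_add (add_le_add w2 (mul_le_mul_right w1 _)) (mul_le_mul_right w0 _)).trans ?_
  rw [hSG, ← ENNReal.ofReal_pow (by positivity), ← ENNReal.ofReal_mul (by positivity),
    ← ENNReal.ofReal_mul (by positivity), ← ENNReal.ofReal_mul (by positivity),
    ← ENNReal.ofReal_add (by positivity) (by positivity),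
    ← ENNReal.ofReal_add (by positivity) (by positivity),
    ← ENNReal.ofReal_add (by positivity) (by positivity),
    ← ENNReal.ofReal_mul (by positivity)]
  apply ENNReal.ofReal_le_ofReal
  have hsp : 0 < s := by linarith
  have hlamp : 0 < lam := by linarith
  have hM2 : M ^ 2 ≤ 8 * (1 + B ^ 2) * (G ^ 2 + (1 + lam) ^ 2 * f r0 ^ 2) := by
    have e1 : M ^ 2 ≤ 2 * ((2 * G) ^ 2 + (s ^ 2 * |f r0| * B) ^ 2) := by
      rw [hM]; nlinarith [sq_nonneg (2 * G - s ^ 2 * |f r0| * B)]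
    have e2 : (s ^ 2 * |f r0| * B) ^ 2 = B ^ 2 * (lam ^ 2 * f r0 ^ 2) := by
      rw [hs2, mul_pow, mul_pow, sq_abs]; ring
    have e3 : lam ^ 2 * f r0 ^ 2 ≤ (1 + lam) ^ 2 * f r0 ^ 2 := by gcongr; linarith
    have e4 : B ^ 2 * (lam ^ 2 * f r0 ^ 2) ≤ B ^ 2 * ((1 + lam) ^ 2 * f r0 ^ 2) := by gcongr
    have e5 : 0 ≤ B ^ 2 * G ^ 2 := by positivity
    have e6 : 0 ≤ (1 + lam) ^ 2 * f r0 ^ 2 := by positivity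
    have e7 : 0 ≤ B ^ 2 * ((1 + lam) ^ 2 * f r0 ^ 2) := by positivity
    nlinarith
  have hc4 : c ^ 4 ≤ 1 := pow_le_one₀ hc.le hc1
  have t1 : (1 + lam) * (9 * M / (c * s)) ^ 2 ≤ 162 * M ^ 2 / c ^ 4 := by
    have e : (9 * M / (c * s)) ^ 2 = 81 * M ^ 2 / (c ^ 2 * lam) := by
      rw [div_pow, mul_pow, mul_pow, hs2]; norm_num
    have hc2 : c ^ 4 ≤ c ^ 2 := pow_le_pow_of_le_one hc.le hc1 (by norm_num)
    calc (1 + lam) * (9 * M / (c * s)) ^ 2 ≤ (2 * lam) * (81 * M ^ 2 / (c ^ 2 * lam)) := by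
          rw [e]; gcongr; linarith
      _ = 162 * M ^ 2 / c ^ 2 := by field_simp; ring
      _ ≤ _ := by gcongr
  have t0 : (1 + lam) ^ 2 * (M / s ^ 2) ^ 2 ≤ 4 * M ^ 2 / c ^ 4 := by
    calc (1 + lam) ^ 2 * (M / s ^ 2) ^ 2 ≤ (2 * lam) ^ 2 * (M / s ^ 2) ^ 2 := by
          gcongr; linarith
      _ = 4 * M ^ 2 := by rw [hs2]; field_simp; ring
      _ ≤ _ := by rw [le_div_iff₀ (by positivity)]; nlinarith [sq_nonneg M]
  have t2 : (19 * M / c ^ 2) ^ 2 = 361 * M ^ 2 / c ^ 4 := by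
    rw [div_pow, mul_pow, ← pow_mul]; norm_num
  calc _ ≤ 361 * M ^ 2 / c ^ 4 + 162 * M ^ 2 / c ^ 4 + 4 * M ^ 2 / c ^ 4 := by
        rw [t2]; gcongr
    _ = 527 * M ^ 2 / c ^ 4 := by ring
    _ ≤ 527 * (8 * (1 + B ^ 2) * (G ^ 2 + (1 + lam) ^ 2 * f r0 ^ 2)) / c ^ 4 := by gcongr
    _ = _ := by ring
end
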